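/- Let R be a commutative Noetherian ring, 𝔞 ⊆ 𝔟 proper ideals of R with dim R/𝔟 ≤ 1, and M an R-module such that Ext^i_R(R/𝔞, M) is a finitely generated R-module for every i ≥ 0. Then H^i_𝔟(M) is 𝔟-cofinite for every i ≥ 0. -/

import Mathlib

open CategoryTheory

universe u

/-- The `R`-module `Ext^i_R(N, M)` for two `R`-modules (objects of `ModuleCat R`). -/
noncomputable def extObj {R : Type u} [CommRing R] (N M : ModuleCat.{u} R) (i : ℕ) :
    ModuleCat.{u} R :=
  ((Ext R (ModuleCat.{u} R) i).obj (Opposite.op N)).obj M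

/-- The `R`-module `Ext^i_R(R/𝔞, M)`. -/
noncomputable def extIdeal {R : Type u} [CommRing R] (𝔞 : Ideal R) (i : ℕ)
    (M : ModuleCat.{u} R) : ModuleCat.{u} R :=
  extObj (ModuleCat.of R (R ⧸ 𝔞)) M i

/-- An `R`-module `M` is `𝔞`-cofinite if `Supp_R M ⊆ V(𝔞)` and `Ext^i_R(R/𝔞, M)` is a finitely
generated `R`-module for every `i ≥ 0`. -/
def IsCofinite {R : Type u} [CommRing R] (𝔞 : Ideal R) (M : ModuleCat.{u} R) : Prop :=
  Module.support R M ⊆ PrimeSpectrum.zeroLocus (𝔞 : Set R) ∧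
    ∀ i : ℕ, Module.Finite R (extIdeal 𝔞 i M)

/-- The Krull dimension `dim_R M` of an `R`-module `M`: the Krull dimension of its support,
i.e. the supremum of `dim R/𝔭` over primes `𝔭` in the support of `M`. -/
noncomputable def moduleDim (R : Type u) [CommRing R] (M : Type u) [AddCommGroup M]
    [Module R M] : WithBot ℕ∞ :=
  Order.krullDim (Module.support R M)

/-- An `R`-module `M` is in `FD_{≤n}` if there is a finitely generated submodule `N ⊆ M`
with `dim_R (M/N) ≤ n`. -/
def MemFD (R : Type u) [CommRing R] (n : ℕ) (M : Type u) [AddCommGroup M] [Module R M] : Prop :=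
  ∃ N : Submodule R M, N.FG ∧ moduleDim R (M ⧸ N) ≤ (n : WithBot ℕ∞)

/-- An `R`-module `M` is `𝔞`-torsion if every element is annihilated by some power of `𝔞`. -/
def IsTorsionIdeal {R : Type u} [CommRing R] (𝔞 : Ideal R) (M : Type u) [AddCommGroup M]
    [Module R M] : Prop :=
  ∀ m : M, ∃ n : ℕ, ∀ a ∈ 𝔞 ^ n, a • m = 0

/-- The arithmetic rank of an ideal `𝔞`: the least `n` such that there exist `a₁, …, aₙ ∈ R`
with `Rad (a₁, …, aₙ) = Rad 𝔞`. -/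
noncomputable def arithRank {R : Type u} [CommRing R] (𝔞 : Ideal R) : ℕ :=
  sInf {n : ℕ | ∃ f : Fin n → R, (Ideal.span (Set.range f)).radical = 𝔞.radical}

/-!
Let `X` be `𝔟`-torsion with `dim R/𝔟 ≤ 1` and with `Ext^0(R/𝔟, X)` and `Ext^1(R/𝔟, X)` finitely
generated. Then all `Ext^i(R/𝔟, X)` are finitely generated: inverting the elements outside the
finitely many nonmaximal primes over `𝔟` makes `X` Artinian, so for `x ∈ 𝔟` the submodules
`x^m X` stabilise up to such denominators, and `X/(x^m X + ker x^m)` becomes Artinian over `R`.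
Artinian modules with finitely generated `𝔟`-torsion form a Serre class (Melkersson), which takes
care of that quotient, and one proceeds by induction on the generators of `𝔟`.

This applies to `Γ_𝔟(M)`, since `M/Γ_𝔟(M)` has no nonzero map from `R/𝔟`. Embedding `M/Γ_𝔟(M)` in a
`𝔟`-torsion-free injective module `E` with cokernel `C` gives `H^{i+1}_𝔟(M) ≅ H^i_𝔟(C)`, and `C`
inherits the finiteness hypothesis, so the theorem follows by induction on `i`.
-/

noncomputable section

section ExtFunctor

open ProjectiveResolution

variable {R : Type u} [CommRing R]

/-- The cochain complex `Hom(P, Y)` for a projective resolution `P` of a module. Its cohomology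
is `Ext R _ n`, while classes in `Abelian.Ext` are represented by its cocycles. -/
abbrev homComplex {X : ModuleCat.{u} R} (P : ProjectiveResolution X) (Y : ModuleCat.{u} R) :
    CochainComplex (ModuleCat.{u} R) ℕ :=
  P.complex.linearYonedaObj R Y

section Cocycles

variable {X : ModuleCat.{u} R} (P : ProjectiveResolution X) (Y : ModuleCat.{u} R) (n : ℕ)

lemma smul_extMk {Y : ModuleCat.{u} R} {n m : ℕ} (f : P.complex.X n ⟶ Y) (hm : n + 1 = m)
    (hf : P.complex.d m n ≫ f = 0) (r : R) :
    r • P.extMk f m hm hf = P.extMk (r • f) m hm (by simp [hf]) := by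
  rw [Abelian.Ext.smul_eq_comp_mk₀, extMk_comp_mk₀]
  congr 1

lemma eq_zero_of_extMk_zero_eq_zero {Y : ModuleCat.{u} R} (f : P.complex.X 0 ⟶ Y)
    (hf : P.complex.d 1 0 ≫ f = 0) (h : P.extMk f 1 (zero_add 1) hf = 0) : f = 0 := by
  rw [← P.extEquivCohomologyClass.apply_eq_iff_eq, extEquivCohomologyClass_extMk,
    extEquivCohomologyClass_zero, CochainComplex.HomComplex.CohomologyClass.mk_eq_zero_iff,
    CochainComplex.HomComplex.Cocycle.toSingleMk_mem_coboundaries_iff _ _ _ _ _ 1 (by lia)] at h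
  obtain ⟨g, hg⟩ := h
  have isZero_X_one : Limits.IsZero (P.cochainComplex.X 1) :=
    HomologicalComplex.isZero_extend_X _ _ _ (by simp; lia)
  rw [isZero_X_one.eq_of_src g 0, Limits.comp_zero] at hg
  rw [← cancel_epi (P.cochainComplexXIso (-(0 : ℕ)) 0 rfl).hom, Limits.comp_zero]
  exact hg.symm

/-- The morphism `P.complex.X n ⟶ Y` underlying a cocycle of `Hom(P, Y)`. -/
def cocycleHom : (homComplex P Y).cycles n →ₗ[R] (P.complex.X n ⟶ Y) :=
  ((homComplex P Y).iCycles n).hom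

lemma cocycleHom_injective : Function.Injective (cocycleHom P Y n) :=
  (ModuleCat.mono_iff_injective ((homComplex P Y).iCycles n)).1 inferInstance

lemma d_comp_cocycleHom (z : (homComplex P Y).cycles n) :
    P.complex.d (n + 1) n ≫ cocycleHom P Y n z = 0 :=
  congr($((homComplex P Y).iCycles_d n (n + 1)) z)

lemma exists_cocycleHom_eq (f : P.complex.X n ⟶ Y) (hf : P.complex.d (n + 1) n ≫ f = 0) :
    ∃ z, cocycleHom P Y n z = f :=
  have exact_iCycles_d : Function.Exact ((homComplex P Y).iCycles n).hom
      ((homComplex P Y).d n (n + 1)).hom :=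
    (ShortComplex.ShortExact.moduleCat_exact_iff_function_exact _).1
      (ShortComplex.exact_of_f_is_kernel (.mk _ _ ((homComplex P Y).iCycles_d n (n + 1)))
        ((homComplex P Y).cyclesIsKernel n (n + 1) (by simp)))
  (exact_iCycles_d f).1 hf

lemma cocycleHom_toCycles {m : ℕ} (g : (homComplex P Y).X m) :
    cocycleHom P Y n ((homComplex P Y).toCycles m n g) = (homComplex P Y).d m n g :=
  congr($((homComplex P Y).toCycles_i m n) g)

/-- The class in `Abelian.Ext X Y n` of a cocycle of `Hom(P, Y)`. -/
def cocycleToExt : (homComplex P Y).cycles n →ₗ[R] Abelian.Ext X Y n where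
  toFun z := P.extMk (cocycleHom P Y n z) (n + 1) rfl (d_comp_cocycleHom P Y n z)
  map_add' z w := by rw [add_extMk]; congr 1; exact map_add _ z w
  map_smul' r z := by rw [RingHom.id_apply, smul_extMk]; congr 1; exact map_smul _ r z

lemma cocycleToExt_toCycles {m : ℕ} (g : (homComplex P Y).X m) :
    cocycleToExt P Y n ((homComplex P Y).toCycles m n g) = 0 := by
  by_cases h : m + 1 = n
  · exact (P.extMk_eq_zero_iff _ (n + 1) rfl (d_comp_cocycleHom P Y n _) m h).2
      ⟨g, (cocycleHom_toCycles P Y n g).symm⟩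
  · rw [HomologicalComplex.toCycles_eq_zero _ (by simpa using h)]
    exact map_zero _

lemma homologyπ_eq_zero_of_cocycleToExt_eq_zero (z : (homComplex P Y).cycles n)
    (hz : cocycleToExt P Y n z = 0) : (homComplex P Y).homologyπ n z = 0 := by
  rcases n with _ | n
  · have hom_eq_zero : cocycleHom P Y 0 z = 0 :=
      eq_zero_of_extMk_zero_eq_zero P _ (d_comp_cocycleHom P Y 0 z) hz
    rw [cocycleHom_injective P Y 0 (hom_eq_zero.trans (map_zero _).symm), map_zero]
  · obtain ⟨g, hg⟩ := (P.extMk_eq_zero_iff _ (n + 1 + 1) rfl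
      (d_comp_cocycleHom P Y (n + 1) z) n rfl).1 hz
    rw [cocycleHom_injective P Y (n + 1) (hg.symm.trans (cocycleHom_toCycles P Y (n + 1) g).symm)]
    exact congr($((homComplex P Y).toCycles_comp_homologyπ n (n + 1)) g)

lemma cocycleToExt_surjective : Function.Surjective (cocycleToExt P Y n) := fun α ↦ by
  obtain ⟨f, hf, rfl⟩ := P.extMk_surjective α (n + 1) rfl
  obtain ⟨z, rfl⟩ := exists_cocycleHom_eq P Y n f hf
  exact ⟨z, rfl⟩

lemma homologyπ_surjective : Function.Surjective ((homComplex P Y).homologyπ n).hom :=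
  (ModuleCat.epi_iff_surjective _).1 inferInstance

lemma ker_homologyπ :
    LinearMap.ker ((homComplex P Y).homologyπ n).hom = LinearMap.ker (cocycleToExt P Y n) := by
  ext z
  refine ⟨fun hz ↦ ?_, homologyπ_eq_zero_of_cocycleToExt_eq_zero P Y n z⟩
  have exact_toCycles_homologyπ : Function.Exact
      ((homComplex P Y).toCycles ((ComplexShape.up ℕ).prev n) n).hom
      ((homComplex P Y).homologyπ n).hom :=
    (ShortComplex.ShortExact.moduleCat_exact_iff_function_exact _).1
      (ShortComplex.exact_of_g_is_cokernel
        (.mk _ _ ((homComplex P Y).toCycles_comp_homologyπ ((ComplexShape.up ℕ).prev n) n))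
        ((homComplex P Y).homologyIsCokernel _ n rfl))
  obtain ⟨g, rfl⟩ := (exact_toCycles_homologyπ z).1 hz
  exact cocycleToExt_toCycles P Y n g

/-- The cohomology of `Hom(P, Y)` in degree `n` is `Abelian.Ext X Y n`. -/
def homologyEquivExt : (homComplex P Y).homology n ≃ₗ[R] Abelian.Ext X Y n :=
  (LinearMap.quotKerEquivOfSurjective _ (homologyπ_surjective P Y n)).symm ≪≫ₗ
    Submodule.quotEquivOfEq _ _ (ker_homologyπ P Y n) ≪≫ₗ
    LinearMap.quotKerEquivOfSurjective _ (cocycleToExt_surjective P Y n)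

lemma homologyEquivExt_homologyπ (z : (homComplex P Y).cycles n) :
    homologyEquivExt P Y n ((homComplex P Y).homologyπ n z) = cocycleToExt P Y n z := by
  have symm_homologyπ : (LinearMap.quotKerEquivOfSurjective _ (homologyπ_surjective P Y n)).symm
      (((homComplex P Y).homologyπ n).hom z) = Submodule.Quotient.mk z :=
    (LinearEquiv.symm_apply_eq _).2 rfl
  exact congrArg (fun w ↦ LinearMap.quotKerEquivOfSurjective _ (cocycleToExt_surjective P Y n)
    (Submodule.quotEquivOfEq _ _ (ker_homologyπ P Y n) w)) symm_homologyπ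

end Cocycles

section Naturality

variable {X X' : ModuleCat.{u} R} {P : ProjectiveResolution X} {P' : ProjectiveResolution X'}
  {g : X ⟶ X'} (φ : ProjectiveResolution.Hom P P' g) (Y : ModuleCat.{u} R) (n : ℕ)

/-- The morphism of complexes `Hom(P', Y) ⟶ Hom(P, Y)` induced by a morphism of resolutions. -/
def homComplexMap : homComplex P' Y ⟶ homComplex P Y :=
  (HomologicalComplex.unopFunctor _ _).map
    (((((linearYoneda R (ModuleCat.{u} R)).obj Y).rightOp.mapHomologicalComplex _).map φ.hom).op)

lemma isoExt_hom_naturality :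
    ((Ext R (ModuleCat.{u} R) n).map g.op).app Y ≫ (P.isoExt n Y).hom =
      (P'.isoExt n Y).hom ≫ HomologicalComplex.homologyMap (homComplexMap φ Y) n := by
  let F := ((linearYoneda R (ModuleCat.{u} R)).obj Y).rightOp
  let F' := F.mapHomologicalComplex (ComplexShape.down ℕ)
  have isoLeftDerivedObj_naturality :
      CommSq (P'.isoLeftDerivedObj F n).inv.unop (((Ext R (ModuleCat.{u} R) n).map g.op).app Y)
        (HomologicalComplex.homologyMap (F'.map φ.hom) n).unop
        (P.isoLeftDerivedObj F n).inv.unop :=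
    ⟨congr($(isoLeftDerivedObj_inv_naturality g P P' φ.hom
      (φ.hom_f_zero_comp_π_f_zero.trans (by simp)) F n).unop).symm⟩
  have homologyUnop_naturality :
      CommSq (HomologicalComplex.homologyUnop (F'.obj P'.complex) n).hom
        (HomologicalComplex.homologyMap (homComplexMap φ Y) n)
        (HomologicalComplex.homologyMap (F'.map φ.hom) n).unop
        (HomologicalComplex.homologyUnop (F'.obj P.complex) n).hom :=
    ⟨congr($(HomologicalComplex.homologyOp_hom_naturality (homComplexMap φ Y) n).unop)⟩
  exact (isoLeftDerivedObj_naturality.horiz_comp homologyUnop_naturality.horiz_inv).w.symm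

lemma homologyEquivExt_homologyMap (z : (homComplex P' Y).homology n) :
    homologyEquivExt P Y n (HomologicalComplex.homologyMap (homComplexMap φ Y) n z) =
      (Abelian.Ext.mk₀ g).comp (homologyEquivExt P' Y n z) (zero_add n) := by
  obtain ⟨z, rfl⟩ := homologyπ_surjective P' Y n z
  have homologyMap_homologyπ :
      HomologicalComplex.homologyMap (homComplexMap φ Y) n ((homComplex P' Y).homologyπ n z) =
        (homComplex P Y).homologyπ n (HomologicalComplex.cyclesMap (homComplexMap φ Y) n z) :=
    congr($(HomologicalComplex.homologyπ_naturality (homComplexMap φ Y) n) z)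
  have cocycleHom_cyclesMap :
      cocycleHom P Y n (HomologicalComplex.cyclesMap (homComplexMap φ Y) n z) =
        φ.hom.f n ≫ cocycleHom P' Y n z :=
    congr($(HomologicalComplex.cyclesMap_i (homComplexMap φ Y) n) z)
  calc homologyEquivExt P Y n (HomologicalComplex.homologyMap (homComplexMap φ Y) n
          ((homComplex P' Y).homologyπ n z))
    _ = cocycleToExt P Y n (HomologicalComplex.cyclesMap (homComplexMap φ Y) n z) := by
        rw [homologyMap_homologyπ, homologyEquivExt_homologyπ]
    _ = (Abelian.Ext.mk₀ g).comp (cocycleToExt P' Y n z) (zero_add n) := by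
        refine Eq.trans ?_ (mk₀_comp_extMk (cocycleHom P' Y n z) (n + 1) rfl
          (d_comp_cocycleHom P' Y n z) φ).symm
        simp only [cocycleToExt, LinearMap.coe_mk, AddHom.coe_mk, cocycleHom_cyclesMap]
    _ = _ := congrArg (fun w ↦ (Abelian.Ext.mk₀ g).comp w (zero_add n))
        (homologyEquivExt_homologyπ P' Y n z).symm

end Naturality

/-- The value `extObj X Y n` of the left derived functor `Ext R _ n` is the derived-category
module `Abelian.Ext X Y n`, for which Mathlib has the long exact sequences. -/
def extObjEquivExt (X Y : ModuleCat.{u} R) (n : ℕ) : extObj X Y n ≃ₗ[R] Abelian.Ext X Y n :=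
  ((projectiveResolution X).isoExt n Y).toLinearEquiv ≪≫ₗ
    homologyEquivExt (projectiveResolution X) Y n

lemma extObjEquivExt_map {X X' : ModuleCat.{u} R} (g : X ⟶ X') (Y : ModuleCat.{u} R) (n : ℕ)
    (z : extObj X' Y n) :
    extObjEquivExt X Y n (((Ext R (ModuleCat.{u} R) n).map g.op).app Y z) =
      (Abelian.Ext.mk₀ g).comp (extObjEquivExt X' Y n z) (zero_add n) := by
  let φ : ProjectiveResolution.Hom (projectiveResolution X) (projectiveResolution X') g :=
    { hom := lift g _ _
      hom_f_zero_comp_π_f_zero := (lift_commutes_zero g _ _).trans (by simp) }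
  exact (congrArg (homologyEquivExt (projectiveResolution X) Y n)
    congr($(isoExt_hom_naturality φ Y n) z)).trans (homologyEquivExt_homologyMap φ Y n _)

end ExtFunctor

end

section SerreClasses

open Abelian ModuleCat

variable {R : Type u} [CommRing R]

/-- The class of finitely generated modules, as an object property so that `Ext`-finiteness and
Melkersson's condition below are both instances of membership in a Serre class. -/
def finitelyGenerated (R : Type u) [CommRing R] : ObjectProperty (ModuleCat.{u} R) :=
  fun M ↦ Module.Finite R M

section

variable {P : ObjectProperty (ModuleCat.{u} R)} {A B C : Type u} [AddCommGroup A]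
  [AddCommGroup B] [AddCommGroup C] [Module R A] [Module R B] [Module R C]

lemma isSerreClass_of_function_exact (zero : P (of R PUnit.{u + 1}))
    (middle : ∀ {A B C : Type u} [AddCommGroup A] [AddCommGroup B] [AddCommGroup C] [Module R A]
      [Module R B] [Module R C] (f : A →ₗ[R] B) (g : B →ₗ[R] C), Function.Exact f g →
      P (of R A) → P (of R C) → P (of R B)) : P.IsSerreClass where
  exists_zero := ⟨_, isZero_of_subsingleton _, zero⟩
  prop_of_mono f hf hN := middle (0 : PUnit.{u + 1} →ₗ[R] _) f.hom
    (LinearMap.exact_zero_iff_injective _ _ |>.2 ((ModuleCat.mono_iff_injective f).1 hf)) zero hN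
  prop_of_epi f hf hM := middle f.hom (0 : _ →ₗ[R] PUnit.{u + 1})
    (LinearMap.exact_zero_iff_surjective _ _ |>.2 ((ModuleCat.epi_iff_surjective f).1 hf)) hM zero
  prop_X₂_of_shortExact {S} hS h₁ h₃ := middle S.f.hom S.g.hom
    ((ShortComplex.ShortExact.moduleCat_exact_iff_function_exact S).1 hS.exact) h₁ h₃

instance [IsNoetherianRing R] : (finitelyGenerated R).IsSerreClass :=
  isSerreClass_of_function_exact (inferInstanceAs (Module.Finite R PUnit.{u + 1}))
    fun {A B C} _ _ _ _ _ _ f g hfg hA hC ↦ by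
      have : Module.Finite R A := hA
      have : Module.Finite R C := hC
      have := isNoetherian_of_range_eq_ker f g hfg.linearMap_ker_eq.symm
      exact Module.IsNoetherian.finite R B

section LongExactSequences

variable (N : Type u) [AddCommGroup N] [Module R N]

/-- The map `Ext^i(N, A) → Ext^i(N, B)` induced by a linear map `A → B`. -/
noncomputable def extPostcomp (f : A →ₗ[R] B) (i : ℕ) :
    Ext (of R N) (of R A) i →ₗ[R] Ext (of R N) (of R B) i :=
  (Ext.mk₀ (ofHom f)).postcompOfLinear R (of R N) (add_zero i)

variable {f : A →ₗ[R] B} {g : B →ₗ[R] C} (hfg : Function.Exact f g)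
  (hf : Function.Injective f) (hg : Function.Surjective g)
include hfg hf hg

lemma shortExact_of_function_exact :
    (shortComplexOfCompEqZero f g hfg.linearMap_comp_eq_zero).ShortExact :=
  shortComplex_shortExact _ hfg hf hg

/-- The connecting homomorphism `Ext^i(N, C) → Ext^{i+1}(N, A)` of a short exact sequence
`0 → A → B → C → 0`. -/
noncomputable def extConnecting (i : ℕ) :
    Ext (of R N) (of R C) i →ₗ[R] Ext (of R N) (of R A) (i + 1) :=
  (shortExact_of_function_exact hfg hf hg).extClass.postcompOfLinear R (of R N) rfl

lemma exact_extConnecting_extPostcomp (i : ℕ) :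
    Function.Exact (extConnecting N hfg hf hg i) (extPostcomp N f (i + 1)) :=
  (ShortComplex.ab_exact_iff_function_exact _).1
    (Ext.covariant_sequence_exact₁' (of R N) (shortExact_of_function_exact hfg hf hg) i (i + 1) rfl)

lemma exact_extPostcomp (i : ℕ) : Function.Exact (extPostcomp N f i) (extPostcomp N g i) :=
  (ShortComplex.ab_exact_iff_function_exact _).1
    (Ext.covariant_sequence_exact₂' (of R N) (shortExact_of_function_exact hfg hf hg) i)

lemma exact_extPostcomp_extConnecting (i : ℕ) :
    Function.Exact (extPostcomp N g i) (extConnecting N hfg hf hg i) :=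
  (ShortComplex.ab_exact_iff_function_exact _).1
    (Ext.covariant_sequence_exact₃' (of R N) (shortExact_of_function_exact hfg hf hg) i (i + 1) rfl)

end LongExactSequences

variable [P.IsSerreClass]

lemma prop_of_function_exact (f : A →ₗ[R] B) (g : B →ₗ[R] C) (hfg : Function.Exact f g)
    (hA : P (of R A)) (hC : P (of R C)) : P (of R B) :=
  P.prop_X₂_of_exact (S := shortComplexOfCompEqZero f g hfg.linearMap_comp_eq_zero)
    ((ShortComplex.ShortExact.moduleCat_exact_iff_function_exact _).2 hfg) hA hC

lemma prop_of_injective (f : A →ₗ[R] B) (hf : Function.Injective f) (hB : P (of R B)) :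
    P (of R A) :=
  have : Mono (ofHom f) := (ModuleCat.mono_iff_injective _).2 hf
  P.prop_of_mono (ofHom f) hB

lemma prop_of_surjective (f : A →ₗ[R] B) (hf : Function.Surjective f) (hA : P (of R A)) :
    P (of R B) :=
  have : Epi (ofHom f) := (ModuleCat.epi_iff_surjective _).2 hf
  P.prop_of_epi (ofHom f) hA

lemma prop_of_subsingleton [Subsingleton A] : P (of R A) :=
  P.prop_of_isZero (isZero_of_subsingleton _)

/-- The module `Ext^i(N, X)` belongs to the class `P`. -/
def ExtMem (P : ObjectProperty (ModuleCat.{u} R)) (N : Type u) [AddCommGroup N] [Module R N]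
    (X : Type u) [AddCommGroup X] [Module R X] (i : ℕ) : Prop :=
  P (of R (Ext (of R N) (of R X) i))

namespace ExtMem

variable {N : Type u} [AddCommGroup N] [Module R N] {i : ℕ}

lemma of_equiv_right (h : ExtMem P N A i) (e : A ≃ₗ[R] B) : ExtMem P N B i :=
  prop_of_surjective ((Ext.mk₀ e.toModuleIso.hom).postcompOfLinear R (of R N) (add_zero i))
    (fun x ↦ ⟨x.comp (Ext.mk₀ e.toModuleIso.inv) (add_zero i), by
      simp [Ext.bilinearCompOfLinear, -LinearEquiv.toModuleIso_hom,
        -LinearEquiv.toModuleIso_inv]⟩) h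

lemma of_equiv_left (h : ExtMem P A N i) (e : A ≃ₗ[R] B) : ExtMem P B N i :=
  prop_of_surjective ((Ext.mk₀ e.toModuleIso.inv).precompOfLinear R (of R N) (zero_add i))
    (fun x ↦ ⟨(Ext.mk₀ e.toModuleIso.hom).comp x (zero_add i), by
      simp [-LinearEquiv.toModuleIso_hom, -LinearEquiv.toModuleIso_inv]⟩) h

lemma of_subsingleton_left [Subsingleton N] : ExtMem P N A i :=
  have := (isZero_of_subsingleton (of R N)).hasProjectiveDimensionLT_zero
  have := HasProjectiveDimensionLT.subsingleton (of R N) 0 i i.zero_le (of R A)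
  prop_of_subsingleton

lemma zero_iff : ExtMem P N A 0 ↔ P (of R (N →ₗ[R] A)) :=
  P.prop_iff_of_iso (Ext.linearEquiv₀.trans ModuleCat.homLinearEquiv).toModuleIso

lemma zero_of_injective (f : A →ₗ[R] B) (hf : Function.Injective f) (h : ExtMem P N B 0) :
    ExtMem P N A 0 :=
  have : Mono (ofHom f) := (ModuleCat.mono_iff_injective _).2 hf
  prop_of_injective (extPostcomp N f 0)
    (Ext.postcomp_mk₀_injective_of_mono (of R N) (ofHom f)) h

lemma zero_of_surjective (f : A →ₗ[R] B) (hf : Function.Surjective f) (h : ExtMem P A N 0) :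
    ExtMem P B N 0 :=
  have : Epi (ofHom f) := (ModuleCat.epi_iff_surjective _).2 hf
  prop_of_injective ((Ext.mk₀ (ofHom f)).precompOfLinear R (of R N) (zero_add 0))
    (Ext.precomp_mk₀_injective_of_epi (of R N) (ofHom f)) h

section LongExactSequences

variable {f : A →ₗ[R] B} {g : B →ₗ[R] C} (hfg : Function.Exact f g)
  (hf : Function.Injective f) (hg : Function.Surjective g)
include hfg hf hg

lemma covariant₁ (hC : ExtMem P N C i) (hB : ExtMem P N B (i + 1)) : ExtMem P N A (i + 1) :=
  prop_of_function_exact _ _ (exact_extConnecting_extPostcomp N hfg hf hg i) hC hB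

lemma covariant₂ (hA : ExtMem P N A i) (hC : ExtMem P N C i) : ExtMem P N B i :=
  prop_of_function_exact _ _ (exact_extPostcomp N hfg hf hg i) hA hC

lemma covariant₃ (hB : ExtMem P N B i) (hA : ExtMem P N A (i + 1)) : ExtMem P N C i :=
  prop_of_function_exact _ _ (exact_extPostcomp_extConnecting N hfg hf hg i) hB hA

lemma contravariant₂ (hC : ExtMem P C N i) (hA : ExtMem P A N i) : ExtMem P B N i :=
  prop_of_function_exact ((Ext.mk₀ (ofHom g)).precompOfLinear R (of R N) (zero_add i))
    ((Ext.mk₀ (ofHom f)).precompOfLinear R (of R N) (zero_add i))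
    ((ShortComplex.ab_exact_iff_function_exact _).1
      (Ext.contravariant_sequence_exact₂' (shortExact_of_function_exact hfg hf hg) (of R N) i))
    hC hA

lemma contravariant₃ (hA : ExtMem P A N i) (hB : ExtMem P B N (i + 1)) : ExtMem P C N (i + 1) :=
  have hS := shortExact_of_function_exact hfg hf hg
  prop_of_function_exact (hS.extClass.precompOfLinear R (of R N) (add_comm 1 i))
    ((Ext.mk₀ (ofHom g)).precompOfLinear R (of R N) (zero_add (i + 1)))
    ((ShortComplex.ab_exact_iff_function_exact _).1
      (Ext.contravariant_sequence_exact₃' hS (of R N) i (i + 1) (add_comm 1 i))) hA hB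

end LongExactSequences

variable {M : Type u} [AddCommGroup M] [Module R M]

lemma fin_fun (h : ExtMem P N M i) (n : ℕ) : ExtMem P (Fin n → N) M i := by
  induction n with
  | zero => exact of_subsingleton_left
  | succ n ih =>
    exact (contravariant₂ (f := LinearMap.inl R N (Fin n → N)) .inl_snd LinearMap.inl_injective
      LinearMap.snd_surjective ih h).of_equiv_left (Fin.consLinearEquiv R fun _ : Fin (n + 1) ↦ N)

end ExtMem

end

lemma isTorsionBySet_quotient (𝔟 : Ideal R) : Module.IsTorsionBySet R (R ⧸ 𝔟) 𝔟 :=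
  (Module.isTorsionBySet_quotient_iff 𝔟 𝔟).2 fun r _ ha ↦ 𝔟.mul_mem_right r ha

lemma exists_surjective_fin_fun_quotient {𝔞 : Ideal R} (N : Type u) [AddCommGroup N] [Module R N]
    [Module.Finite R N] (hN : Module.IsTorsionBySet R N 𝔞) :
    ∃ (n : ℕ) (f : (Fin n → R ⧸ 𝔞) →ₗ[R] N), Function.Surjective f := by
  obtain ⟨n, s, hs⟩ := Module.Finite.exists_fin (R := R) (M := N)
  let q (i : Fin n) : (R ⧸ 𝔞) →ₗ[R] N :=
    Submodule.liftQ 𝔞 (LinearMap.toSpanSingleton R N (s i)) fun a ha ↦ @hN (s i) ⟨a, ha⟩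
  refine ⟨n, LinearMap.lsum R _ R q, ?_⟩
  rw [← LinearMap.range_eq_top, eq_top_iff, ← hs, Submodule.span_le]
  rintro _ ⟨i, rfl⟩
  refine ⟨Pi.single i (Submodule.Quotient.mk 1), ?_⟩
  rw [LinearMap.lsum_piSingle]
  exact one_smul R (s i)

namespace ExtMem

variable {P : ObjectProperty (ModuleCat.{u} R)} [P.IsSerreClass] [IsNoetherianRing R]
  {M : Type u} [AddCommGroup M] [Module R M]

lemma of_isTorsionBySet {𝔞 : Ideal R} (h : ∀ i, ExtMem P (R ⧸ 𝔞) M i) (N : Type u)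
    [AddCommGroup N] [Module R N] [Module.Finite R N] (hN : Module.IsTorsionBySet R N 𝔞) (i : ℕ) :
    ExtMem P N M i := by
  induction i generalizing N with
  | zero =>
    obtain ⟨n, f, hf⟩ := exists_surjective_fin_fun_quotient N hN
    exact zero_of_surjective f hf ((h 0).fin_fun n)
  | succ i ih =>
    obtain ⟨n, f, hf⟩ := exists_surjective_fin_fun_quotient N hN
    exact contravariant₃ f.exact_subtype_ker_map (Submodule.subtype_injective _) hf
      (ih (LinearMap.ker f) fun x a ↦
        Subtype.ext (funext fun j ↦ @isTorsionBySet_quotient _ _ 𝔞 (x.1 j) a))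
      ((h (i + 1)).fin_fun n)

lemma of_prop (h : P (of R M)) (N : Type u) [AddCommGroup N] [Module R N] [Module.Finite R N]
    (i : ℕ) : ExtMem P N M i := by
  have extMem_self (i : ℕ) : ExtMem P R M i := by
    cases i with
    | zero =>
      exact zero_iff.2 ((P.prop_iff_of_iso (LinearMap.ringLmapEquivSelf R R M).toModuleIso).2 h)
    | succ i =>
      have : Projective (of R R) := (IsProjective.iff_projective R).1 inferInstance
      have := Ext.subsingleton_of_projective (of R R) (of R M) i
      exact prop_of_subsingleton
  exact of_isTorsionBySet (𝔞 := ⊥)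
    (fun i ↦ (extMem_self i).of_equiv_left (Submodule.quotEquivOfEqBot ⊥ rfl).symm) N
    (fun _ a ↦ by rw [(Ideal.mem_bot.1 a.2 : (a : R) = 0), zero_smul]) i

end ExtMem

end SerreClasses

section Torsion

open Submodule ModuleCat

variable {R : Type u} [CommRing R]

section

variable {A : Type u} [AddCommGroup A] [Module R A]

lemma map_subtype_torsionBySet_torsionBy (x : R) (s : Set R) :
    (torsionBySet R (torsionBy R A x) s).map (torsionBy R A x).subtype =
      torsionBySet R A (insert x s) := by
  ext a
  simp [mem_torsionBySet_iff, Subtype.ext_iff, and_comm]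

/-- Torsion by `s` inside the `x`-torsion is torsion by `insert x s`. -/
noncomputable def torsionBySetTorsionByEquiv (x : R) (s : Set R) (A : Type u) [AddCommGroup A]
    [Module R A] : torsionBySet R (torsionBy R A x) s ≃ₗ[R] torsionBySet R A (insert x s) :=
  (equivMapOfInjective _ (subtype_injective _) _).trans
    (LinearEquiv.ofEq _ _ (map_subtype_torsionBySet_torsionBy x s))

lemma torsionBySet_empty : torsionBySet R A (∅ : Set R) = ⊤ := by
  ext a
  simp

lemma IsTorsionIdeal.exists_pow_smul_eq_zero {𝔟 : Ideal R} (hA : IsTorsionIdeal 𝔟 A) {x : R}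
    (hx : x ∈ 𝔟) (a : A) : ∃ n : ℕ, x ^ n • a = 0 :=
  (hA a).imp fun n hn ↦ hn _ (Ideal.pow_mem_pow hx n)

lemma exists_forall_ge_eq_of_antitone {α : Type*} [PartialOrder α] [WellFoundedLT α] {G : ℕ → α}
    (hG : Antitone G) : ∃ k, ∀ m ≥ k, G m = G k := by
  obtain ⟨k, hk⟩ := WellFoundedGT.monotone_chain_condition (α := αᵒᵈ) ⟨G, hG⟩
  exact ⟨k, fun m hm ↦ (hk m hm).symm⟩

lemma exists_forall_ge_eq_of_antitone₂ {α : Type*} [PartialOrder α] [WellFoundedLT α]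
    {F : ℕ → ℕ → α} (h₁ : ∀ k, Antitone (F · k)) (h₂ : ∀ n, Antitone (F n)) :
    ∃ K, ∀ k ≥ K, ∀ n, F n k = F n K := by
  obtain ⟨k₀, hk₀⟩ := exists_forall_ge_eq_of_antitone (G := fun k ↦ F k k)
    fun a b h ↦ (h₁ b h).trans (h₂ a h)
  choose κ hκ using fun n ↦ exists_forall_ge_eq_of_antitone (h₂ n)
  refine ⟨max k₀ ((Finset.range k₀).sup κ), fun k hk n ↦ ?_⟩
  obtain hn | hn := lt_or_ge n k₀
  · have hle : κ n ≤ (Finset.range k₀).sup κ := Finset.le_sup (Finset.mem_range.2 hn)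
    rw [hκ n k (hle.trans ((le_max_right _ _).trans hk)), hκ n _ (hle.trans (le_max_right _ _))]
  · have eq_diagonal (k) (hk : k₀ ≤ k) : F n k = F k₀ k₀ := by
      refine le_antisymm ((h₁ k hn).trans (h₂ _ hk)) ?_
      rw [← hk₀ (max n k) (hn.trans (le_max_left _ _))]
      exact (h₁ _ (le_max_left _ _)).trans (h₂ _ (le_max_right _ _))
    rw [eq_diagonal k ((le_max_left _ _).trans hk), eq_diagonal _ (le_max_left _ _)]

/-- The `x`-torsion of `x ^ n • N`. As `n` varies these layers detect `N` among the submodules of an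
`x`-power torsion module, so chain conditions can be tested on the `x`-torsion. -/
def torsionLayer (x : R) (N : Submodule R A) (n : ℕ) : Submodule R (torsionBy R A x) :=
  (N.map (LinearMap.lsmul R A (x ^ n))).comap (torsionBy R A x).subtype

lemma torsionLayer_antitone (x : R) (N : Submodule R A) : Antitone (torsionLayer x N) :=
  antitone_nat_of_succ_le fun n ↦ comap_mono <| by
    rintro _ ⟨a, ha, rfl⟩
    exact ⟨x • a, N.smul_mem x ha, by simp [smul_smul, pow_succ']⟩

lemma torsionLayer_mono (x : R) (n : ℕ) :
    Monotone fun N : Submodule R A ↦ torsionLayer x N n :=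
  fun _ _ h ↦ comap_mono (map_mono h)

lemma le_of_torsionLayer_le {x : R} (hx : ∀ a : A, ∃ n : ℕ, x ^ n • a = 0) {N N' : Submodule R A}
    (hN : N' ≤ N) (h : ∀ n, torsionLayer x N n ≤ torsionLayer x N' n) : N ≤ N' := by
  suffices ∀ (n : ℕ), ∀ a ∈ N, x ^ n • a = 0 → a ∈ N' from fun a ha ↦
    (hx a).elim fun n ↦ this n a ha
  intro n
  induction n with
  | zero => simp +contextual
  | succ n ih =>
    intro a ha hxa
    have mem_torsionBy : x ^ n • a ∈ torsionBy R A x := by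
      rwa [mem_torsionBy_iff, smul_smul, ← pow_succ']
    have mem_layer : (⟨x ^ n • a, mem_torsionBy⟩ : torsionBy R A x) ∈ torsionLayer x N n :=
      ⟨a, ha, rfl⟩
    obtain ⟨b, hb, hba⟩ : ∃ b ∈ N', x ^ n • b = x ^ n • a := h n mem_layer
    have sub_mem : a - b ∈ N' := ih (a - b) (sub_mem ha (hN hb)) (by rw [smul_sub, hba, sub_self])
    simpa using add_mem sub_mem hb

lemma isArtinian_of_torsionBy {x : R} (hx : ∀ a : A, ∃ n : ℕ, x ^ n • a = 0)
    [IsArtinian R (torsionBy R A x)] : IsArtinian R A := by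
  rw [← monotone_stabilizes_iff_artinian]
  intro N
  obtain ⟨K, hK⟩ := exists_forall_ge_eq_of_antitone₂
    (F := fun n k ↦ torsionLayer x (OrderDual.ofDual (N k)) n)
    (fun k ↦ torsionLayer_antitone x _) (fun n _ _ h ↦ torsionLayer_mono x n (N.monotone h))
  exact ⟨K, fun k hk ↦ le_antisymm (N.monotone hk)
    (le_of_torsionLayer_le hx (N.monotone hk) fun n ↦ (hK k hk n).ge)⟩

lemma isArtinian_of_torsionBySet {s : Set R} (hs : s.Finite) (A : Type u) [AddCommGroup A]
    [Module R A] (hA : ∀ x ∈ s, ∀ a : A, ∃ n : ℕ, x ^ n • a = 0)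
    [IsArtinian R (torsionBySet R A s)] : IsArtinian R A := by
  induction s, hs using Set.Finite.induction_on generalizing A with
  | empty =>
    exact isArtinian_of_linearEquiv ((LinearEquiv.ofEq _ _ torsionBySet_empty).trans topEquiv)
  | @insert x s _ _ ih =>
    have := isArtinian_of_linearEquiv (torsionBySetTorsionByEquiv x s A).symm
    have : IsArtinian R (torsionBy R A x) := ih _ fun y hy a ↦
      (hA y (Set.mem_insert_of_mem x hy) a).imp fun n hn ↦ Subtype.ext hn
    exact isArtinian_of_torsionBy (hA x (Set.mem_insert x s))

lemma isArtinian_of_isTorsionIdeal {𝔟 : Ideal R} (h𝔟 : 𝔟.FG) (hA : IsTorsionIdeal 𝔟 A)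
    [IsArtinian R (torsionBySet R A 𝔟)] : IsArtinian R A := by
  obtain ⟨s, rfl⟩ := h𝔟
  have : IsArtinian R (torsionBySet R A s) := isArtinian_of_linearEquiv
    (LinearEquiv.ofEq _ _ (torsionBySet_eq_torsionBySet_span (s : Set R))).symm
  exact isArtinian_of_torsionBySet s.finite_toSet A fun x hx ↦
    hA.exists_pow_smul_eq_zero (Ideal.subset_span hx)

end

section

variable {P : ObjectProperty (ModuleCat.{u} R)} [P.IsSerreClass] {A : Type u} [AddCommGroup A]
  [Module R A] {x : R}

lemma prop_fin_fun (h : P (of R A)) (n : ℕ) : P (of R (Fin n → A)) := by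
  induction n with
  | zero => exact prop_of_subsingleton
  | succ n ih =>
    exact prop_of_surjective (Fin.consLinearEquiv R fun _ : Fin (n + 1) ↦ A).toLinearMap
      (LinearEquiv.surjective _)
      (prop_of_function_exact (LinearMap.inl R A (Fin n → A)) (LinearMap.snd R A (Fin n → A))
        .inl_snd h ih)

lemma prop_torsionBySet_pow {𝔟 : Ideal R} (h𝔟 : 𝔟.FG) (h : P (of R (torsionBySet R A 𝔟))) (n : ℕ) :
    P (of R (torsionBySet R A (𝔟 ^ n : Ideal R))) := by
  induction n with
  | zero =>
    have : Subsingleton (torsionBySet R A (𝔟 ^ 0 : Ideal R)) := by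
      rw [pow_zero, Ideal.one_eq_top, top_coe, torsionBySet_univ]
      infer_instance
    exact prop_of_subsingleton
  | succ n ih =>
    obtain ⟨k, b, rfl⟩ := fg_iff_exists_fin_generating_family.1 h𝔟
    set 𝔟 : Ideal R := span R (Set.range b)
    let mulMap (i : Fin k) :
        torsionBySet R A (𝔟 ^ (n + 1) : Ideal R) →ₗ[R] torsionBySet R A (𝔟 ^ n : Ideal R) :=
      (LinearMap.lsmul R A (b i)).restrict fun a ha ↦ by
        rw [mem_torsionBySet_iff] at ha ⊢
        intro c
        rw [LinearMap.lsmul_apply, smul_smul]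
        exact ha ⟨c * b i, Ideal.mul_mem_mul c.2 (subset_span ⟨i, rfl⟩)⟩
    let kerMap : LinearMap.ker (LinearMap.pi mulMap) →ₗ[R] torsionBySet R A 𝔟 :=
      (Submodule.subtype _ ∘ₗ Submodule.subtype _).codRestrict _ fun a ↦ by
        rw [show torsionBySet R A 𝔟 = _ from (torsionBySet_eq_torsionBySet_span _).symm,
          mem_torsionBySet_iff]
        rintro ⟨_, i, rfl⟩
        exact congr(($(congrFun a.2 i) : A))
    exact prop_of_function_exact _ _ (LinearMap.pi mulMap).exact_subtype_ker_map
      (prop_of_injective kerMap (fun a b h ↦ Subtype.ext (Subtype.ext congr(($h : A)))) h)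
      (prop_fin_fun ih k)

lemma prop_torsionBy_pow (h : P (of R (torsionBy R A x))) (n : ℕ) :
    P (of R (torsionBy R A (x ^ n))) := by
  rw [← torsionBySet_ideal_span_singleton_eq] at h ⊢
  rw [← Ideal.span_singleton_pow]
  exact prop_torsionBySet_pow (fg_span_singleton x) h n

end

end Torsion

section Melkersson

open Submodule ModuleCat

variable {R : Type u} [CommRing R]

/-- The map `torsionBy x A → torsionBy x B` induced by a linear map `A → B`. -/
def torsionByMap (x : R) {A B : Type u} [AddCommGroup A] [AddCommGroup B] [Module R A] [Module R B]
    (f : A →ₗ[R] B) : torsionBy R A x →ₗ[R] torsionBy R B x :=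
  f.restrict fun a ha ↦ by
    rw [mem_torsionBy_iff] at ha ⊢
    rw [← map_smul, ha, map_zero]

/-- Artinian modules whose `x`-torsion belongs to the class `P`. -/
def artinianTorsionBy (P : ObjectProperty (ModuleCat.{u} R)) (x : R) :
    ObjectProperty (ModuleCat.{u} R) :=
  fun M ↦ IsArtinian R M ∧ P (of R (torsionBy R M x))

/-- Artinian modules whose submodule of elements killed by all of `s` belongs to the class `P`. -/
def artinianTorsionBySet (P : ObjectProperty (ModuleCat.{u} R)) (s : Set R) :
    ObjectProperty (ModuleCat.{u} R) :=
  fun M ↦ IsArtinian R M ∧ P (of R (torsionBySet R M s))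

variable {P : ObjectProperty (ModuleCat.{u} R)}

lemma artinianTorsionBySet_empty : artinianTorsionBySet P ∅ = artinianTorsionBy P (0 : R) := by
  funext M
  have torsionBy_zero : torsionBy R M (0 : R) = ⊤ := eq_top_iff.2 fun a _ ↦ zero_smul R a
  rw [artinianTorsionBySet, artinianTorsionBy, torsionBySet_empty, torsionBy_zero]

lemma artinianTorsionBySet_span (s : Set R) :
    artinianTorsionBySet P (Ideal.span s : Set R) = artinianTorsionBySet P s := by
  funext M
  rw [artinianTorsionBySet, artinianTorsionBySet, ← torsionBySet_eq_torsionBySet_span]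

variable [P.IsSerreClass] {A B C : Type u} [AddCommGroup A] [AddCommGroup B] [AddCommGroup C]
  [Module R A] [Module R B] [Module R C] {x : R}

/-- For `b = g a` killed by `x`, the sequence `x ^ n • ker g` stabilises, so `x ^ m • x • a` lies in
`x ^ (m + 1) • ker g` and `a` can be corrected to a preimage of `b` killed by `x ^ (m + 1)`. -/
lemma exists_forall_torsionBy_exists_map_eq [IsArtinian R A] (g : A →ₗ[R] B)
    (hg : Function.Surjective g) (x : R) :
    ∃ m, ∀ b ∈ torsionBy R B x, ∃ a ∈ torsionBy R A (x ^ m), g a = b := by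
  obtain ⟨m, hm⟩ := IsArtinian.range_smul_pow_stabilizes (LinearMap.ker g) x
  refine ⟨m + 1, fun b hb ↦ ?_⟩
  obtain ⟨a, rfl⟩ := hg b
  have smul_mem_ker : x • a ∈ LinearMap.ker g := by
    rw [LinearMap.mem_ker, map_smul]
    exact hb
  obtain ⟨c, hc⟩ : x ^ m • (⟨x • a, smul_mem_ker⟩ : LinearMap.ker g) ∈
      LinearMap.range (x ^ (m + 1) • (LinearMap.id : LinearMap.ker g →ₗ[R] LinearMap.ker g)) := by
    rw [← hm (m + 1) m.le_succ]
    exact ⟨_, rfl⟩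
  have hc : x ^ (m + 1) • c.1 = x ^ m • x • a := congr(($hc : A))
  have map_c : g c = 0 := c.2
  refine ⟨a - c, ?_, by rw [map_sub, map_c, sub_zero]⟩
  rw [mem_torsionBy_iff, smul_sub, hc, smul_smul, ← pow_succ, sub_self]

lemma artinianTorsionBy_of_surjective (g : A →ₗ[R] B) (hg : Function.Surjective g)
    (h : artinianTorsionBy P x (of R A)) : artinianTorsionBy P x (of R B) := by
  have : IsArtinian R A := h.1
  refine ⟨isArtinian_of_surjective A g hg, ?_⟩
  obtain ⟨m, hm⟩ := exists_forall_torsionBy_exists_map_eq g hg x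
  let E : Submodule R (torsionBy R A (x ^ m)) :=
    ((torsionBy R B x).comap g).comap (torsionBy R A (x ^ m)).subtype
  let q : E →ₗ[R] torsionBy R B x :=
    (g ∘ₗ Submodule.subtype _ ∘ₗ E.subtype).codRestrict (torsionBy R B x) fun a ↦ a.2
  refine prop_of_surjective q (fun ⟨b, hb⟩ ↦ ?_)
    (prop_of_injective E.subtype E.subtype_injective (prop_torsionBy_pow h.2 m))
  obtain ⟨a, ha, rfl⟩ := hm b hb
  exact ⟨⟨⟨a, ha⟩, hb⟩, rfl⟩

lemma torsionByMap_exact (x : R) {f : A →ₗ[R] B} {g : B →ₗ[R] C} (hfg : Function.Exact f g)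
    (hf : Function.Injective f) : Function.Exact (torsionByMap x f) (torsionByMap x g) := by
  intro b
  constructor
  · intro hb
    obtain ⟨a, ha⟩ := (hfg b.1).1 congr(($hb : C))
    refine ⟨⟨a, hf ?_⟩, Subtype.ext ha⟩
    simp [ha]
  · rintro ⟨a, rfl⟩
    exact Subtype.ext (hfg.apply_apply_eq_zero a.1)

instance (x : R) : (artinianTorsionBy P x).IsSerreClass :=
  isSerreClass_of_function_exact ⟨inferInstanceAs (IsArtinian R PUnit.{u + 1}),
    prop_of_subsingleton⟩ fun {A B C} _ _ _ _ _ _ f g hfg hA hC ↦ by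
    have : IsArtinian R A := hA.1
    have : IsArtinian R C := hC.1
    have exact_range : Function.Exact (LinearMap.range f).subtype g := by
      rw [LinearMap.exact_iff, range_subtype, hfg.linearMap_ker_eq]
    exact ⟨isArtinian_of_range_eq_ker f g hfg.linearMap_ker_eq.symm,
      prop_of_function_exact _ _ (torsionByMap_exact x exact_range (subtype_injective _))
        (artinianTorsionBy_of_surjective f.rangeRestrict f.surjective_rangeRestrict hA).2 hC.2⟩

lemma artinianTorsionBySet_insert (x : R) (s : Set R) : artinianTorsionBySet P (insert x s) =
    artinianTorsionBy (artinianTorsionBySet P s) x := by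
  ext M
  have prop_iff := P.prop_iff_of_iso (torsionBySetTorsionByEquiv x s M).toModuleIso
  exact ⟨fun ⟨_, h⟩ ↦ ⟨‹_›, inferInstanceAs (IsArtinian R (torsionBy R M x)), prop_iff.2 h⟩,
    fun ⟨_, _, h⟩ ↦ ⟨‹_›, prop_iff.1 h⟩⟩

lemma isSerreClass_artinianTorsionBySet {s : Set R} (hs : s.Finite) :
    (artinianTorsionBySet P s).IsSerreClass := by
  induction s, hs using Set.Finite.induction_on with
  | empty => exact artinianTorsionBySet_empty (P := P) ▸ inferInstance
  | insert _ _ ih => exact artinianTorsionBySet_insert (P := P) _ _ ▸ inferInstance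

lemma isSerreClass_artinianTorsionBySet_of_fg {𝔟 : Ideal R} (h𝔟 : 𝔟.FG) :
    (artinianTorsionBySet P (𝔟 : Set R)).IsSerreClass := by
  obtain ⟨s, rfl⟩ := h𝔟
  exact artinianTorsionBySet_span (P := P) (s : Set R) ▸
    isSerreClass_artinianTorsionBySet s.finite_toSet

end Melkersson

section NonmaximalPrimes

open Submodule ModuleCat

variable {R : Type u} [CommRing R] {𝔟 : Ideal R}

/-- The nonmaximal primes containing `𝔟`. -/
def nonmaximalPrimes (𝔟 : Ideal R) : Set (Ideal R) := {p | p.IsPrime ∧ 𝔟 ≤ p ∧ ¬ p.IsMaximal}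

/-- The multiplicative set of elements avoiding all nonmaximal primes that contain `𝔟`. -/
def nonmaximalCompl (𝔟 : Ideal R) : Submonoid R where
  carrier := {s | ∀ p ∈ nonmaximalPrimes 𝔟, s ∉ p}
  one_mem' p hp h := hp.1.ne_top ((Ideal.eq_top_iff_one p).2 h)
  mul_mem' hx hy p hp h := (hp.1.mem_or_mem h).elim (hx p hp) (hy p hp)

lemma eq_of_le_of_mem_nonmaximalPrimes (hdim : ringKrullDim (R ⧸ 𝔟) ≤ 1) {p q : Ideal R}
    (hp : p ∈ nonmaximalPrimes 𝔟) (hq : q.IsPrime) (hbq : 𝔟 ≤ q) (hqp : q ≤ p) : q = p := by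
  by_contra hne
  obtain ⟨m, hm, hpm⟩ := Ideal.exists_le_maximal p hp.1.ne_top
  have p_lt_m : p < m := lt_of_le_of_ne hpm fun h ↦ hp.2.2 (h ▸ hm)
  rw [ringKrullDim_quotient] at hdim
  let chain : LTSeries (PrimeSpectrum.zeroLocus (𝔟 : Set R)) :=
    { length := 2
      toFun := ![⟨⟨q, hq⟩, hbq⟩, ⟨⟨p, hp.1⟩, hp.2.1⟩, ⟨⟨m, hm.isPrime⟩, hp.2.1.trans hpm⟩]
      step := fun i ↦ by
        fin_cases i
        · exact lt_of_le_of_ne hqp hne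
        · exact p_lt_m }
  have two_le_one : ((2 : ℕ) : WithBot ℕ∞) ≤ 1 :=
    (Order.LTSeries.length_le_krullDim chain).trans hdim
  exact absurd two_le_one (by decide)

lemma finite_nonmaximalPrimes [IsNoetherianRing R] (hdim : ringKrullDim (R ⧸ 𝔟) ≤ 1) :
    (nonmaximalPrimes 𝔟).Finite :=
  (Ideal.finite_minimalPrimes_of_isNoetherianRing R 𝔟).subset fun _ hp ↦
    ⟨⟨hp.1, hp.2.1⟩, fun _ hq hqp ↦
      (eq_of_le_of_mem_nonmaximalPrimes hdim hp hq.1 hq.2 hqp).ge⟩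

lemma isArtinianRing_quotient_of_forall_isMaximal [IsNoetherianRing R] {I : Ideal R}
    (h : ∀ p : Ideal R, p.IsPrime → I ≤ p → p.IsMaximal) : IsArtinianRing (R ⧸ I) := by
  rw [isArtinianRing_iff_isNoetherianRing_krullDimLE_zero]
  refine ⟨inferInstance, Ring.krullDimLE_zero_iff.2 fun p hp ↦ ?_⟩
  have := h (p.comap (Ideal.Quotient.mk I)) (hp.comap _)
    (Ideal.mk_ker.ge.trans (Ideal.comap_mono bot_le))
  rw [← Ideal.map_comap_of_surjective (Ideal.Quotient.mk I) Ideal.Quotient.mk_surjective p]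
  refine (Ideal.map_eq_top_or_isMaximal_of_surjective (Ideal.Quotient.mk I)
    Ideal.Quotient.mk_surjective this).resolve_left ?_
  rw [Ideal.map_comap_of_surjective (Ideal.Quotient.mk I) Ideal.Quotient.mk_surjective p]
  exact hp.ne_top

lemma isArtinian_of_isTorsionBySet {I : Ideal R} [IsArtinianRing (R ⧸ I)] (N : Type u)
    [AddCommGroup N] [Module R N] [Module.Finite R N] (hN : Module.IsTorsionBySet R N I) :
    IsArtinian R N := by
  obtain ⟨n, f, hf⟩ := exists_surjective_fin_fun_quotient N hN
  have : IsArtinian R (R ⧸ I) :=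
    isArtinian_of_surjective_algebraMap (R := R ⧸ I) Ideal.Quotient.mk_surjective
  exact isArtinian_of_surjective _ f hf

lemma exists_mem_isTorsionBy_of_finite (S : Submonoid R) (N : Type*) [AddCommGroup N] [Module R N]
    [Module.Finite R N] (hS : ∀ x : N, ∃ s ∈ S, s • x = 0) :
    ∃ s ∈ S, Module.IsTorsionBy R N s := by
  choose σ hσ hσ' using hS
  obtain ⟨t, ht⟩ := Module.Finite.fg_top (R := R) (M := N)
  refine ⟨∏ x ∈ t, σ x, prod_mem fun x _ ↦ hσ x, ?_⟩
  rw [Module.isTorsionBy_iff_torsionBy_eq_top, eq_top_iff, ← ht, span_le]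
  intro x hx
  obtain ⟨c, hc⟩ := Finset.dvd_prod_of_mem σ hx
  rw [SetLike.mem_coe, mem_torsionBy_iff, hc, mul_comm, mul_smul, hσ', smul_zero]

lemma isArtinian_of_isTorsion_nonmaximalCompl [IsNoetherianRing R] (N : Type u)
    [AddCommGroup N] [Module R N] [Module.Finite R N] (hN : Module.IsTorsionBySet R N 𝔟)
    (hS : ∀ x : N, ∃ s ∈ nonmaximalCompl 𝔟, s • x = 0) : IsArtinian R N := by
  obtain ⟨s, hs, hsN⟩ := exists_mem_isTorsionBy_of_finite _ N hS
  have := isArtinianRing_quotient_of_forall_isMaximal (I := 𝔟 ⊔ Ideal.span {s}) fun p hp h ↦ by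
    by_contra hmax
    exact hs p ⟨hp, le_sup_left.trans h, hmax⟩
      (h (Ideal.mem_sup_right (Ideal.mem_span_singleton_self s)))
  refine isArtinian_of_isTorsionBySet (I := 𝔟 ⊔ Ideal.span {s}) N ?_
  rintro x ⟨a, ha⟩
  obtain ⟨b, hb, c, hc, rfl⟩ := mem_sup.1 ha
  obtain ⟨c, rfl⟩ := Ideal.mem_span_singleton'.1 hc
  rw [add_smul, @hN x ⟨b, hb⟩, mul_smul, @hsN x, smul_zero, add_zero]

end NonmaximalPrimes

section ExtFinite

open Submodule ModuleCat

variable {R : Type u} [CommRing R] {𝔟 : Ideal R} {X : Type u} [AddCommGroup X] [Module R X]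

/-- The module `Ext^i(R/𝔟, X)` is finitely generated. -/
abbrev ExtFin (𝔟 : Ideal R) (X : Type u) [AddCommGroup X] [Module R X] (i : ℕ) : Prop :=
  ExtMem (finitelyGenerated R) (R ⧸ 𝔟) X i

lemma isTorsionBySet_ext {N : Type u} [AddCommGroup N] [Module R N] {s : Set R}
    (hN : Module.IsTorsionBySet R N s) (X : ModuleCat.{u} R) (i : ℕ) :
    Module.IsTorsionBySet R (Abelian.Ext (of R N) X i) s := by
  intro x a
  have smul_id : (a : R) • 𝟙 (of R N) = 0 := by
    ext y
    exact @hN y a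
  rw [← Abelian.Ext.mk₀_id_comp x, ← Abelian.Ext.smul_comp, ← Abelian.Ext.mk₀_smul, smul_id,
    Abelian.Ext.mk₀_zero, Abelian.Ext.zero_comp]

/-- Evaluation at `1` identifies `Hom(R/I, X)` with the `I`-torsion of `X`. -/
def homQuotientEquivTorsionBySet (I : Ideal R) (X : Type u) [AddCommGroup X] [Module R X] :
    ((R ⧸ I) →ₗ[R] X) ≃ₗ[R] torsionBySet R X I where
  __ := (LinearMap.applyₗ (1 : R ⧸ I)).codRestrict (torsionBySet R X I) fun f ↦ by
    rw [mem_torsionBySet_iff]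
    intro a
    rw [LinearMap.applyₗ_apply_apply, ← map_smul, @isTorsionBySet_quotient _ _ I 1 a, map_zero]
  invFun x := I.liftQ (LinearMap.toSpanSingleton R X x) fun a ha ↦
    (mem_torsionBySet_iff _ _).1 x.2 ⟨a, ha⟩
  left_inv f := by
    ext
    exact one_smul R (f 1)
  right_inv x := Subtype.ext (one_smul R (x : X))

/-- `Ext^0(R/I, X)` is the `I`-torsion of `X`. -/
noncomputable def extZeroEquivTorsionBySet (I : Ideal R) (X : Type u) [AddCommGroup X]
    [Module R X] : Abelian.Ext (of R (R ⧸ I)) (of R X) 0 ≃ₗ[R] torsionBySet R X I :=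
  Abelian.Ext.linearEquiv₀ ≪≫ₗ ModuleCat.homLinearEquiv ≪≫ₗ homQuotientEquivTorsionBySet I X

lemma ExtMem.prop_torsionBySet {P : ObjectProperty (ModuleCat.{u} R)} [P.IsSerreClass]
    (h : ExtMem P (R ⧸ 𝔟) X 0) : P (of R (torsionBySet R X 𝔟)) :=
  (P.prop_iff_of_iso (extZeroEquivTorsionBySet 𝔟 X).toModuleIso).1 h

variable [IsNoetherianRing R]

lemma ExtMem.finite_torsionBySet (h : ExtFin 𝔟 X 0) : Module.Finite R (torsionBySet R X 𝔟) :=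
  h.prop_torsionBySet

/-- The Serre class of Artinian modules with finitely generated `𝔟`-torsion contains `X`, hence
every `Ext^i(R/𝔟, X)`, and the latter is its own `𝔟`-torsion. -/
lemma ExtMem.of_isArtinian [IsArtinian R X] (h : ExtFin 𝔟 X 0) (i : ℕ) : ExtFin 𝔟 X i := by
  have := isSerreClass_artinianTorsionBySet_of_fg (P := finitelyGenerated R)
    (IsNoetherian.noetherian 𝔟)
  have extMem : ExtMem (artinianTorsionBySet (finitelyGenerated R) 𝔟) (R ⧸ 𝔟) X i :=
    of_prop ⟨‹_›, h.prop_torsionBySet⟩ (R ⧸ 𝔟) i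
  have torsion_eq_top := (Module.isTorsionBySet_iff_torsionBySet_eq_top _).1
    (isTorsionBySet_ext (isTorsionBySet_quotient 𝔟) (of R X) i)
  exact prop_of_surjective _
    (LinearMap.range_eq_top.1 ((range_subtype _).trans torsion_eq_top)) extMem.2

lemma ExtMem.of_isTorsion_nonmaximalCompl (hX : IsTorsionIdeal 𝔟 X)
    (hS : ∀ x : X, ∃ s ∈ nonmaximalCompl 𝔟, s • x = 0) (h : ExtFin 𝔟 X 0) (i : ℕ) :
    ExtFin 𝔟 X i := by
  have := h.finite_torsionBySet
  have : IsArtinian R (torsionBySet R X 𝔟) :=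
    isArtinian_of_isTorsion_nonmaximalCompl _ (torsionBySet_isTorsionBySet _)
      fun x ↦ (hS x).imp fun s hs ↦ ⟨hs.1, Subtype.ext hs.2⟩
  have := isArtinian_of_isTorsionIdeal (IsNoetherian.noetherian 𝔟) hX
  exact h.of_isArtinian i

end ExtFinite

section Localization

open Submodule

variable {R : Type u} [CommRing R] {𝔟 : Ideal R}

section

variable (S : Submonoid R) (R' : Type u) [CommRing R'] [Algebra R R']
  {X X' : Type u} [AddCommGroup X] [Module R X] [AddCommGroup X'] [Module R X'] [Module R' X']
  [IsScalarTower R R' X'] (f : X →ₗ[R] X') [IsLocalizedModule S f]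

include S f

lemma IsTorsionIdeal.localization (hX : IsTorsionIdeal 𝔟 X) :
    IsTorsionIdeal (𝔟.map (algebraMap R R')) X' := by
  intro z
  obtain ⟨⟨a, s⟩, rfl⟩ := IsLocalizedModule.mk'_surjective S f z
  obtain ⟨n, hn⟩ := hX a
  refine ⟨n, fun b hb ↦ ?_⟩
  rw [← Ideal.map_pow] at hb
  suffices (𝔟 ^ n).map (algebraMap R R') ≤ LinearMap.ker (LinearMap.toSpanSingleton R' X' _) from
    this hb
  refine Ideal.map_le_iff_le_comap.2 fun c hc ↦ ?_
  change algebraMap R R' c • IsLocalizedModule.mk' f a s = 0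
  rw [algebraMap_smul, ← IsLocalizedModule.mk'_smul, hn c hc, IsLocalizedModule.mk'_zero]

lemma exists_pow_smul_sub_eq_zero [IsArtinian R' X'] (x : R) :
    ∃ m ≠ 0, ∀ z : X, ∃ s ∈ S, ∃ w : X, x ^ m • (s • z - x ^ m • w) = 0 := by
  obtain ⟨n, hn⟩ := IsArtinian.range_smul_pow_stabilizes X' (algebraMap R R' x)
  refine ⟨n + 1, n.succ_ne_zero, fun z ↦ ?_⟩
  obtain ⟨w, hw⟩ : x ^ (n + 1) • f z ∈ LinearMap.range
      (algebraMap R R' x ^ (n + 1 + (n + 1)) • (LinearMap.id : X' →ₗ[R'] X')) := by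
    rw [← hn _ (by lia), hn (n + 1) (by lia)]
    exact ⟨f z, by rw [LinearMap.smul_apply, LinearMap.id_apply, ← map_pow, algebraMap_smul]⟩
  rw [LinearMap.smul_apply, LinearMap.id_apply, ← map_pow, algebraMap_smul] at hw
  obtain ⟨⟨a, s⟩, (rfl : IsLocalizedModule.mk' f a s = w)⟩ :=
    IsLocalizedModule.mk'_surjective S f w
  have map_eq_zero : f (x ^ (n + 1) • ((s : R) • z - x ^ (n + 1) • a)) = 0 := by
    have smul_mk' : (s : R) • IsLocalizedModule.mk' f a s = f a := IsLocalizedModule.mk'_cancel' ..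
    rw [map_smul, map_sub, map_smul, map_smul, smul_sub, smul_comm _ (s : R), ← hw, ← smul_mk',
      smul_smul, smul_smul, smul_smul, sub_eq_zero]
    congr 1
    ring
  obtain ⟨c, hc⟩ := (IsLocalizedModule.eq_zero_iff S f).1 map_eq_zero
  refine ⟨c * s, mul_mem c.2 s.2, c • a, ?_⟩
  rw [mul_smul, smul_comm (x ^ (n + 1)) c, ← Submonoid.smul_def, ← smul_sub, smul_comm]
  exact hc

variable [IsLocalization S R']

lemma torsionBySet_map_le_localized' (h𝔟 : 𝔟.FG) :
    torsionBySet R' X' (𝔟.map (algebraMap R R')) ≤ (torsionBySet R X 𝔟).localized' R' S f := by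
  obtain ⟨t, rfl⟩ := h𝔟
  intro z hz
  obtain ⟨⟨a, s⟩, rfl⟩ := IsLocalizedModule.mk'_surjective S f z
  have exists_smul_eq_zero (x : R) (hx : x ∈ t) : ∃ c : S, (c : R) • x • a = 0 := by
    refine (IsLocalizedModule.mk'_eq_zero' f s).1 ?_
    rw [IsLocalizedModule.mk'_smul, ← algebraMap_smul R']
    exact (mem_torsionBySet_iff _ _).1 hz
      ⟨_, Ideal.mem_map_of_mem (algebraMap R R') (Ideal.subset_span hx)⟩
  choose! c hc using exists_smul_eq_zero
  refine (mem_localized' ..).2 ⟨(∏ x ∈ t, c x) • a, ?_, (∏ x ∈ t, c x) * s,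
    IsLocalizedModule.mk'_cancel_left f a _ s⟩
  rw [← torsionBySet_eq_torsionBySet_span, mem_torsionBySet_iff]
  rintro ⟨x, hx⟩
  obtain ⟨d, hd⟩ := Finset.dvd_prod_of_mem c hx
  rw [hd, mul_comm, mul_smul, smul_comm, smul_comm x, Submonoid.smul_def (c x), hc x hx, smul_zero]

lemma isArtinian_of_isLocalizedModule [IsNoetherianRing R]
    [IsArtinianRing (R' ⧸ 𝔟.map (algebraMap R R'))] (hX : IsTorsionIdeal 𝔟 X)
    [Module.Finite R (torsionBySet R X 𝔟)] : IsArtinian R' X' := by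
  have : IsNoetherianRing R' := IsLocalization.isNoetherianRing S R' inferInstance
  have : Module.Finite R' ((torsionBySet R X 𝔟).localized' R' S f) :=
    .of_isLocalizedModule S (toLocalized' R' S f (torsionBySet R X 𝔟))
  have : Module.Finite R' (torsionBySet R' X' (𝔟.map (algebraMap R R'))) :=
    .of_injective _ (inclusion_injective
      (torsionBySet_map_le_localized' S R' f (IsNoetherian.noetherian 𝔟)))
  have := isArtinian_of_isTorsionBySet _
    (torsionBySet_isTorsionBySet (R := R') (M := X') (𝔟.map (algebraMap R R') : Set R'))
  exact isArtinian_of_isTorsionIdeal (IsNoetherian.noetherian _) (hX.localization S R' f)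

end

variable [IsNoetherianRing R] (hdim : ringKrullDim (R ⧸ 𝔟) ≤ 1)
include hdim

lemma under_mem_nonmaximalPrimes {Q : Ideal (Localization (nonmaximalCompl 𝔟))} (hQ : Q.IsPrime)
    (h : 𝔟.map (algebraMap R _) ≤ Q) : Q.under R ∈ nonmaximalPrimes 𝔟 := by
  obtain ⟨hq, hdisj⟩ := (IsLocalization.isPrime_iff_isPrime_disjoint (nonmaximalCompl 𝔟) _ Q).1 hQ
  have le_under : 𝔟 ≤ Q.under R := Ideal.map_le_iff_le_comap.1 h
  have hfin := finite_nonmaximalPrimes hdim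
  have subset_union :
      (Q.under R : Set R) ⊆ ⋃ p ∈ (hfin.toFinset : Set (Ideal R)), (p : Set R) := by
    intro a ha
    by_contra hcon
    exact Set.disjoint_left.1 hdisj
      (fun p hp hap ↦ hcon (Set.mem_biUnion (hfin.mem_toFinset.2 hp) hap)) ha
  obtain ⟨p, hp, hle⟩ := (Ideal.subset_union_prime (f := id) ⊤ ⊤ fun i hi _ _ ↦
    (hfin.mem_toFinset.1 hi).1).1 subset_union
  rw [Set.Finite.mem_toFinset] at hp
  rwa [eq_of_le_of_mem_nonmaximalPrimes hdim hp hq le_under hle]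

lemma isArtinianRing_localization_quotient :
    IsArtinianRing (Localization (nonmaximalCompl 𝔟) ⧸
      𝔟.map (algebraMap R (Localization (nonmaximalCompl 𝔟)))) := by
  have : IsNoetherianRing (Localization (nonmaximalCompl 𝔟)) :=
    IsLocalization.isNoetherianRing (nonmaximalCompl 𝔟) _ inferInstance
  refine isArtinianRing_quotient_of_forall_isMaximal fun Q hQ h ↦ ?_
  obtain ⟨Q', hQ', hle⟩ := Ideal.exists_le_maximal Q hQ.ne_top
  have under_mem := under_mem_nonmaximalPrimes hdim hQ h
  have under_mem' := under_mem_nonmaximalPrimes hdim hQ'.isPrime (h.trans hle)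
  have under_eq := eq_of_le_of_mem_nonmaximalPrimes hdim under_mem' under_mem.1 under_mem.2.1
    (Ideal.comap_mono hle)
  rwa [← IsLocalization.map_under (nonmaximalCompl 𝔟) _ Q, under_eq,
    IsLocalization.map_under (nonmaximalCompl 𝔟) _ Q']

end Localization

section KernelsAndQuotients

open Abelian Submodule ModuleCat

variable {R : Type u} [CommRing R] {A B C D : Type u} [AddCommGroup A] [AddCommGroup B]
  [AddCommGroup C] [AddCommGroup D] [Module R A] [Module R B] [Module R C] [Module R D]

lemma exact_subtype_ker_rangeRestrict (f : A →ₗ[R] B) :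
    Function.Exact (LinearMap.ker f).subtype f.rangeRestrict := by
  rw [LinearMap.exact_iff, LinearMap.ker_rangeRestrict, range_subtype]

variable {P : ObjectProperty (ModuleCat.{u} R)} [P.IsSerreClass]

lemma prop_of_exact_of_range_le {f : A →ₗ[R] B} {g : B →ₗ[R] C} (hfg : Function.Exact f g)
    {h : D →ₗ[R] C} (hgh : LinearMap.range g ≤ LinearMap.range h) (hA : P (of R A))
    (hD : P (of R D)) : P (of R B) :=
  have prop_range_h := prop_of_surjective h.rangeRestrict h.surjective_rangeRestrict hD
  prop_of_function_exact f g.rangeRestrict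
    (by rw [LinearMap.exact_iff, LinearMap.ker_rangeRestrict, hfg.linearMap_ker_eq]) hA
    (prop_of_injective (inclusion hgh) (inclusion_injective hgh) prop_range_h)

namespace ExtMem

variable {N : Type u} [AddCommGroup N] [Module R N] {i : ℕ}

lemma ker_one {f : A →ₗ[R] B} (hB : ExtMem P N B 0) (hA : ExtMem P N A 1) :
    ExtMem P N (LinearMap.ker f) 1 :=
  covariant₁ (exact_subtype_ker_rangeRestrict f) (subtype_injective _) f.surjective_rangeRestrict
    (zero_of_injective _ (subtype_injective _) hB) hA

lemma range {f : A →ₗ[R] B} (hA : ExtMem P N A i) (hker : ExtMem P N (LinearMap.ker f) (i + 1)) :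
    ExtMem P N (LinearMap.range f) i :=
  covariant₃ (exact_subtype_ker_rangeRestrict f) (subtype_injective _) f.surjective_rangeRestrict
    hA hker

lemma quotient {p : Submodule R A} (hA : ExtMem P N A i) (hp : ExtMem P N p (i + 1)) :
    ExtMem P N (A ⧸ p) i :=
  covariant₃ (LinearMap.exact_subtype_mkQ p) (subtype_injective _) p.mkQ_surjective hA hp

/-- Multiplication by `a` on `A` factors through its range and acts as zero on `Ext^{i+1}(N, A)`, so
the image of `Ext^{i+1}(N, A)` in `Ext^{i+1}(N, a • A)` is covered by the connecting map from
`Ext^i(N, A / a • A)`. -/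
lemma of_ker_lsmul {a : R} (hN : Module.IsTorsionBy R N a)
    (hker : ExtMem P N (LinearMap.ker (LinearMap.lsmul R A a)) (i + 1))
    (hquot : ExtMem P N (A ⧸ LinearMap.range (LinearMap.lsmul R A a)) i) :
    ExtMem P N A (i + 1) := by
  let μ := LinearMap.lsmul R A a
  have exact_μ := exact_subtype_ker_rangeRestrict μ
  have exact_mkQ := LinearMap.exact_subtype_mkQ (LinearMap.range μ)
  have exact_ext := exact_extPostcomp N exact_μ (subtype_injective _) μ.surjective_rangeRestrict
    (i + 1)
  refine prop_of_exact_of_range_le exact_ext (h := extConnecting N exact_mkQ (subtype_injective _)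
    (mkQ_surjective _) i) ?_ hker hquot
  rintro _ ⟨y, rfl⟩
  refine (exact_extConnecting_extPostcomp N exact_mkQ _ _ i _).1 ?_
  have comp_eq_smul : ofHom μ.rangeRestrict ≫ ofHom (LinearMap.range μ).subtype = a • 𝟙 (of R A) :=
    rfl
  change (y.comp _ (add_zero (i + 1))).comp _ (add_zero (i + 1)) = 0
  rw [Ext.comp_assoc_of_third_deg_zero, Ext.mk₀_comp_mk₀, comp_eq_smul, ← Ext.smul_eq_comp_mk₀]
  exact @isTorsionBySet_ext _ _ N _ _ _ ((Module.isTorsionBySet_singleton_iff a).2 hN) _ _ y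
    ⟨a, rfl⟩

lemma of_le_radical_annihilator [IsNoetherianRing R] {𝔟 : Ideal R} (h : ExtMem P (R ⧸ 𝔟) A 0)
    (h𝔟 : 𝔟 ≤ (Module.annihilator R A).radical) (i : ℕ) : ExtMem P (R ⧸ 𝔟) A i := by
  obtain ⟨n, hn⟩ := Ideal.exists_pow_le_of_le_radical_of_fg h𝔟 (IsNoetherian.noetherian 𝔟)
  have torsion_eq_top : torsionBySet R A (𝔟 ^ n : Ideal R) = ⊤ :=
    (Module.isTorsionBySet_iff_torsionBySet_eq_top _).1 fun a b ↦
      Module.mem_annihilator.1 (hn b.2) a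
  exact of_prop (prop_of_surjective _
    (LinearMap.range_eq_top.1 ((range_subtype _).trans torsion_eq_top))
    (prop_torsionBySet_pow (IsNoetherian.noetherian 𝔟) h.prop_torsionBySet n)) _ i

end ExtMem

end KernelsAndQuotients

section TorsionModules

open Submodule ModuleCat

variable {R : Type u} [CommRing R] {𝔟 : Ideal R}

namespace IsTorsionIdeal

variable {X Y : Type u} [AddCommGroup X] [AddCommGroup Y] [Module R X] [Module R Y]

lemma of_injective (hY : IsTorsionIdeal 𝔟 Y) (f : X →ₗ[R] Y) (hf : Function.Injective f) :
    IsTorsionIdeal 𝔟 X := fun x ↦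
  (hY (f x)).imp fun n hn a ha ↦ hf (by rw [map_smul, hn a ha, map_zero])

lemma of_surjective (hX : IsTorsionIdeal 𝔟 X) (f : X →ₗ[R] Y) (hf : Function.Surjective f) :
    IsTorsionIdeal 𝔟 Y := by
  intro y
  obtain ⟨x, rfl⟩ := hf y
  exact (hX x).imp fun n hn a ha ↦ by rw [← map_smul, hn a ha, map_zero]

end IsTorsionIdeal

/-- The composite of the inclusion of the `r`-torsion of `X` and the projection to `X / r • X`; its
cokernel is `X / (r • X + ker r)`. -/
def kerLsmulToQuotient (r : R) (X : Type u) [AddCommGroup X] [Module R X] :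
    LinearMap.ker (LinearMap.lsmul R X r) →ₗ[R] X ⧸ LinearMap.range (LinearMap.lsmul R X r) :=
  mkQ _ ∘ₗ Submodule.subtype _

variable {X : Type u} [AddCommGroup X] [Module R X]

lemma exists_smul_eq_zero_of_smul_sub_eq_zero {S : Submonoid R} {r : R}
    (hS : ∀ z : X, ∃ s ∈ S, ∃ w : X, r • (s • z - r • w) = 0)
    (z : (X ⧸ LinearMap.range (LinearMap.lsmul R X r)) ⧸ LinearMap.range (kerLsmulToQuotient r X)) :
    ∃ s ∈ S, s • z = 0 := by
  obtain ⟨z, rfl⟩ := mkQ_surjective _ z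
  obtain ⟨z, rfl⟩ := mkQ_surjective _ z
  obtain ⟨s, hs, w, hw⟩ := hS z
  refine ⟨s, hs, ?_⟩
  rw [← map_smul, mkQ_apply, Quotient.mk_eq_zero]
  refine ⟨⟨s • z - r • w, hw⟩, ?_⟩
  have mkQ_smul : mkQ (LinearMap.range (LinearMap.lsmul R X r)) (r • w) = 0 :=
    (Quotient.mk_eq_zero _).2 ⟨w, rfl⟩
  rw [← map_smul, ← sub_zero (mkQ _ (s • z)), ← mkQ_smul, ← map_sub]
  rfl

variable [IsNoetherianRing R]

lemma ExtMem.of_forall_isTorsionBy {r : R} (hr : r ∈ 𝔟) (hX : IsTorsionIdeal 𝔟 X)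
    (hS : ∀ z : X, ∃ s ∈ nonmaximalCompl 𝔟, ∃ w : X, r • (s • z - r • w) = 0)
    (h₀ : ExtFin 𝔟 X 0) (h₁ : ExtFin 𝔟 X 1)
    (extFin_of_injective : ∀ (A : Type u) [AddCommGroup A] [Module R A] (f : A →ₗ[R] X),
      Function.Injective f → Module.IsTorsionBy R A r → ExtFin 𝔟 A 0 → ExtFin 𝔟 A 1 →
      ∀ i, ExtFin 𝔟 A i) (i : ℕ) : ExtFin 𝔟 X i := by
  let μ := LinearMap.lsmul R X r
  let η := kerLsmulToQuotient r X
  have h_ker (i) : ExtFin 𝔟 (LinearMap.ker μ) i :=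
    extFin_of_injective _ _ (subtype_injective _) (fun a ↦ Subtype.ext a.2)
      (h₀.zero_of_injective _ (subtype_injective _)) (h₀.ker_one h₁) i
  have h_quot₀ : ExtFin 𝔟 (X ⧸ LinearMap.range μ) 0 := h₀.quotient (h₁.range (h_ker 2))
  have h_ker_η (i) : ExtFin 𝔟 (LinearMap.ker η) i :=
    extFin_of_injective _ ((LinearMap.ker μ).subtype ∘ₗ (LinearMap.ker η).subtype)
      ((subtype_injective _).comp (subtype_injective _))
      (fun a ↦ Subtype.ext (Subtype.ext a.1.2))
      ((h_ker 0).zero_of_injective _ (subtype_injective _)) (h_quot₀.ker_one (h_ker 1)) i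
  have h_range (i) : ExtFin 𝔟 (LinearMap.range η) i := (h_ker i).range (h_ker_η (i + 1))
  have h_coker (i) : ExtFin 𝔟 ((X ⧸ LinearMap.range μ) ⧸ LinearMap.range η) i :=
    .of_isTorsion_nonmaximalCompl
      ((hX.of_surjective _ (mkQ_surjective _)).of_surjective _ (mkQ_surjective _))
      (exists_smul_eq_zero_of_smul_sub_eq_zero hS) (h_quot₀.quotient (h_range 1)) i
  have h_quot (i) : ExtFin 𝔟 (X ⧸ LinearMap.range μ) i :=
    .covariant₂ (LinearMap.exact_subtype_mkQ (LinearMap.range η)) (subtype_injective _)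
      (mkQ_surjective _) (h_range i) (h_coker i)
  cases i with
  | zero => exact h₀
  | succ i =>
    exact .of_ker_lsmul (fun a ↦ @isTorsionBySet_quotient _ _ 𝔟 a ⟨r, hr⟩) (h_ker _) (h_quot i)

lemma ExtMem.of_isTorsionIdeal_of_le_radical (hdim : ringKrullDim (R ⧸ 𝔟) ≤ 1) {s : Set R}
    (hs : s.Finite) (hs𝔟 : s ⊆ 𝔟) (X : Type u) [AddCommGroup X] [Module R X]
    (h𝔟 : 𝔟 ≤ (Ideal.span s ⊔ Module.annihilator R X).radical) (hX : IsTorsionIdeal 𝔟 X)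
    (h₀ : ExtFin 𝔟 X 0) (h₁ : ExtFin 𝔟 X 1) (i : ℕ) : ExtFin 𝔟 X i := by
  induction s, hs using Set.Finite.induction_on generalizing X i with
  | empty => exact h₀.of_le_radical_annihilator (by simpa using h𝔟) i
  | @insert x s _ _ ih =>
    obtain ⟨hx, hs𝔟⟩ := Set.insert_subset_iff.1 hs𝔟
    have := h₀.finite_torsionBySet
    have := isArtinianRing_localization_quotient hdim
    have := isArtinian_of_isLocalizedModule (nonmaximalCompl 𝔟) (Localization (nonmaximalCompl 𝔟))
      (LocalizedModule.mkLinearMap (nonmaximalCompl 𝔟) X) hX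
    obtain ⟨m, hm, hS⟩ := exists_pow_smul_sub_eq_zero (nonmaximalCompl 𝔟)
      (Localization (nonmaximalCompl 𝔟)) (LocalizedModule.mkLinearMap (nonmaximalCompl 𝔟) X) x
    refine of_forall_isTorsionBy (Ideal.pow_mem_of_mem 𝔟 hx m (Nat.pos_of_ne_zero hm)) hX hS h₀ h₁
      (fun A _ _ f hf hxA ↦ ih hs𝔟 A ?_ (hX.of_injective f hf)) i
    have annihilator_le := f.annihilator_le_of_injective hf
    have mem_radical : x ∈ (Ideal.span s ⊔ Module.annihilator R A).radical :=
      ⟨m, Ideal.mem_sup_right (Module.mem_annihilator.2 fun a ↦ @hxA a)⟩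
    refine h𝔟.trans (Ideal.radical_le_radical_iff.2 (sup_le ?_ ?_))
    · exact Ideal.span_le.2 (Set.insert_subset mem_radical
        fun y hy ↦ Ideal.le_radical (Ideal.mem_sup_left (Ideal.subset_span hy)))
    · exact annihilator_le.trans (le_sup_right.trans Ideal.le_radical)

theorem ExtMem.of_isTorsionIdeal (hdim : ringKrullDim (R ⧸ 𝔟) ≤ 1) (hX : IsTorsionIdeal 𝔟 X)
    (h₀ : ExtFin 𝔟 X 0) (h₁ : ExtFin 𝔟 X 1) (i : ℕ) : ExtFin 𝔟 X i := by
  obtain ⟨s, hs⟩ := IsNoetherian.noetherian 𝔟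
  exact of_isTorsionIdeal_of_le_radical hdim s.finite_toSet (hs ▸ subset_span) X
    ((hs.ge.trans le_sup_left).trans Ideal.le_radical) hX h₀ h₁ i

end TorsionModules

section PowerTorsion

open Submodule ModuleCat

variable {R : Type u} [CommRing R] (𝔟 : Ideal R)

/-- The submodule `Γ_𝔟(X)` of elements killed by a power of `𝔟`. -/
def powTorsion (X : Type u) [AddCommGroup X] [Module R X] : Submodule R X where
  carrier := {x | ∃ n : ℕ, ∀ a ∈ 𝔟 ^ n, a • x = 0}
  zero_mem' := ⟨0, fun a _ ↦ smul_zero a⟩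
  add_mem' := by
    rintro x y ⟨n, hn⟩ ⟨k, hk⟩
    refine ⟨n + k, fun a ha ↦ ?_⟩
    rw [smul_add, hn a (Ideal.pow_le_pow_right (Nat.le_add_right n k) ha),
      hk a (Ideal.pow_le_pow_right (Nat.le_add_left k n) ha), add_zero]
  smul_mem' := by
    rintro c x ⟨n, hn⟩
    exact ⟨n, fun a ha ↦ by rw [smul_comm, hn a ha, smul_zero]⟩

lemma isTorsionIdeal_powTorsion (X : Type u) [AddCommGroup X] [Module R X] :
    IsTorsionIdeal 𝔟 (powTorsion 𝔟 X) := fun x ↦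
  x.2.imp fun _ hn a ha ↦ Subtype.ext (hn a ha)

/-- Modules without nonzero elements killed by `𝔟`. -/
def IsTorsionFreeIdeal (X : Type u) [AddCommGroup X] [Module R X] : Prop :=
  ∀ x : X, (∀ a ∈ 𝔟, a • x = 0) → x = 0

variable {𝔟} {X : Type u} [AddCommGroup X] [Module R X]

lemma IsTorsionFreeIdeal.pow (hX : IsTorsionFreeIdeal 𝔟 X) (n : ℕ) :
    IsTorsionFreeIdeal (𝔟 ^ n) X := by
  induction n with
  | zero =>
    intro x h
    simpa using h 1 (by simp)
  | succ n ih =>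
    refine fun x h ↦ hX x fun a ha ↦ ih _ fun c hc ↦ ?_
    rw [smul_smul]
    exact h _ (pow_succ 𝔟 n ▸ Ideal.mul_mem_mul hc ha)

lemma IsTorsionIdeal.exists_isTorsionBySet_pow [Module.Finite R X] (hX : IsTorsionIdeal 𝔟 X) :
    ∃ n : ℕ, Module.IsTorsionBySet R X (𝔟 ^ n : Ideal R) := by
  choose ν hν using hX
  obtain ⟨t, ht⟩ := Module.Finite.fg_top (R := R) (M := X)
  refine ⟨t.sup ν, fun x a ↦ ?_⟩
  have top_le_torsionBy : (⊤ : Submodule R X) ≤ torsionBy R X (a : R) := by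
    rw [← ht, span_le]
    exact fun x hx ↦ hν x a (Ideal.pow_le_pow_right (Finset.le_sup hx) a.2)
  exact top_le_torsionBy (mem_top (x := x))

lemma injective_quotient_of_injective (N : Submodule R X) [Module.Injective R X]
    [Module.Injective R N] : Module.Injective R (X ⧸ N) := by
  obtain ⟨p, hp⟩ := Module.Injective.out N.subtype (subtype_injective _) LinearMap.id
  let s : (X ⧸ N) →ₗ[R] X := N.liftQ (LinearMap.id - N.subtype ∘ₗ p) fun x hx ↦ by
    rw [LinearMap.mem_ker, LinearMap.sub_apply, LinearMap.comp_apply, sub_eq_zero]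
    exact congr(($(hp ⟨x, hx⟩) : X)).symm
  have mkQ_section (y) : N.mkQ (s y) = y := by
    obtain ⟨x, rfl⟩ := mkQ_surjective _ y
    have mkQ_p : N.mkQ (p x : X) = 0 := (Quotient.mk_eq_zero _).2 (p x).2
    exact (map_sub N.mkQ x (p x)).trans (by rw [mkQ_p, sub_zero])
  refine ⟨fun A B _ _ _ _ f hf g ↦ ?_⟩
  obtain ⟨h, hh⟩ := Module.Injective.out f hf (s ∘ₗ g)
  refine ⟨N.mkQ ∘ₗ h, fun a ↦ ?_⟩
  rw [LinearMap.comp_apply, hh, LinearMap.comp_apply, mkQ_section]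

lemma exists_injective_hom (X : Type u) [AddCommGroup X] [Module R X] :
    ∃ (E : Type u) (_ : AddCommGroup E) (_ : Module R E) (_ : Module.Injective R E)
      (f : X →ₗ[R] E), Function.Injective f := by
  let E := Injective.under (of R X)
  have : Injective (of R E) := inferInstanceAs (Injective E)
  exact ⟨E, inferInstance, inferInstance, Module.injective_module_of_injective_object R E,
    (Injective.ι (of R X)).hom, (ModuleCat.mono_iff_injective _).1 inferInstance⟩

variable [IsNoetherianRing R]

lemma isTorsionFreeIdeal_quotient_powTorsion (X : Type u) [AddCommGroup X] [Module R X] :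
    IsTorsionFreeIdeal 𝔟 (X ⧸ powTorsion 𝔟 X) := by
  intro x h
  obtain ⟨x, rfl⟩ := mkQ_surjective _ x
  let B : Submodule R X := Submodule.map (LinearMap.toSpanSingleton R X x) 𝔟
  have hB : B ≤ powTorsion 𝔟 X := by
    rintro _ ⟨a, ha, rfl⟩
    exact (Quotient.mk_eq_zero _).1 (h a ha)
  have : Module.Finite R B := Module.Finite.iff_fg.2 ((IsNoetherian.noetherian 𝔟).map _)
  obtain ⟨n, hn⟩ := ((isTorsionIdeal_powTorsion 𝔟 X).of_injective (inclusion hB)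
    (inclusion_injective hB)).exists_isTorsionBySet_pow
  have pow_mul_le : 𝔟 ^ n * 𝔟 ≤ LinearMap.ker (LinearMap.toSpanSingleton R X x) :=
    Ideal.mul_le.2 fun c hc a ha ↦ by
      rw [LinearMap.mem_ker, LinearMap.toSpanSingleton_apply, mul_smul]
      exact congr(($(@hn ⟨a • x, a, ha, rfl⟩ ⟨c, hc⟩) : X))
  exact (Quotient.mk_eq_zero _).2 ⟨n + 1, fun a ha ↦ pow_mul_le (pow_succ 𝔟 n ▸ ha)⟩

lemma IsTorsionIdeal.exists_pow_inf_le_map_ker (hX : IsTorsionIdeal 𝔟 X) {J : Ideal R}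
    (f : J →ₗ[R] X) : ∃ n, 𝔟 ^ n ⊓ J ≤ Submodule.map J.subtype (LinearMap.ker f) := by
  obtain ⟨n, hn⟩ := (hX.of_injective (LinearMap.range f).subtype
    (subtype_injective _)).exists_isTorsionBySet_pow
  obtain ⟨k, hk⟩ := Ideal.exists_pow_inf_eq_pow_smul 𝔟 J
  have artin_rees := hk (n + k) (Nat.le_add_left k n)
  rw [smul_eq_mul, Ideal.mul_top, Nat.add_sub_cancel, smul_eq_mul] at artin_rees
  refine ⟨n + k, artin_rees.le.trans ((Ideal.mul_mono_right inf_le_right).trans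
    (Ideal.mul_le.2 fun c hc a ha ↦ ⟨c • ⟨a, ha⟩, ?_, rfl⟩))⟩
  rw [SetLike.mem_coe, LinearMap.mem_ker, map_smul]
  exact congr(($(@hn ⟨_, ⟨a, ha⟩, rfl⟩ ⟨c, hc⟩) : X))

/-- A map from an ideal `J` to the torsion factors through some `J / (𝔟 ^ n ⊓ J)`, so it extends to
`R / 𝔟 ^ n` with values in `X`, hence in the torsion. -/
instance injective_powTorsion (X : Type u) [AddCommGroup X] [Module R X] [Module.Injective R X] :
    Module.Injective R (powTorsion 𝔟 X) := by
  refine Module.Baer.injective fun J f ↦ ?_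
  obtain ⟨n, hn⟩ := (isTorsionIdeal_powTorsion 𝔟 X).exists_pow_inf_le_map_ker f
  let K : Submodule R J := comap J.subtype (𝔟 ^ n)
  let g : (J ⧸ K) →ₗ[R] X := K.liftQ ((powTorsion 𝔟 X).subtype ∘ₗ f) fun a ha ↦ by
    obtain ⟨b, hb, hab⟩ := hn ⟨ha, a.2⟩
    obtain rfl : b = a := Subtype.ext hab
    rw [LinearMap.mem_ker, LinearMap.comp_apply, LinearMap.mem_ker.1 hb, map_zero]
  let j : (J ⧸ K) →ₗ[R] (R ⧸ 𝔟 ^ n) := K.mapQ (𝔟 ^ n) J.subtype le_rfl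
  have hj : Function.Injective j := by
    rw [← LinearMap.ker_eq_bot, ker_mapQ]
    exact mkQ_map_self K
  obtain ⟨h, hh⟩ := Module.Injective.out j hj g
  refine ⟨LinearMap.codRestrict _ (h ∘ₗ mkQ (𝔟 ^ n)) fun r ↦ ⟨n, fun a ha ↦ ?_⟩,
    fun a ha ↦ Subtype.ext (hh (K.mkQ ⟨a, ha⟩))⟩
  rw [LinearMap.comp_apply, ← map_smul, @isTorsionBySet_quotient _ _ (𝔟 ^ n) _ ⟨a, ha⟩, map_zero]

lemma IsTorsionIdeal.exists_injective_hom (hX : IsTorsionIdeal 𝔟 X) :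
    ∃ (E : Type u) (_ : AddCommGroup E) (_ : Module R E) (_ : Module.Injective R E)
      (f : X →ₗ[R] E), Function.Injective f ∧ IsTorsionIdeal 𝔟 E := by
  obtain ⟨E, _, _, _, f, hf⟩ := _root_.exists_injective_hom (R := R) X
  refine ⟨powTorsion 𝔟 E, inferInstance, inferInstance, inferInstance,
    f.codRestrict _ fun x ↦ ?_, fun x y h ↦ hf congr(($h : E)), isTorsionIdeal_powTorsion 𝔟 E⟩
  exact (hX x).imp fun n hn a ha ↦ by rw [← map_smul, hn a ha, map_zero]

lemma IsTorsionFreeIdeal.exists_injective_hom (hX : IsTorsionFreeIdeal 𝔟 X) :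
    ∃ (E : Type u) (_ : AddCommGroup E) (_ : Module R E) (_ : Module.Injective R E)
      (f : X →ₗ[R] E), Function.Injective f ∧ IsTorsionFreeIdeal 𝔟 E := by
  obtain ⟨E, _, _, _, f, hf⟩ := _root_.exists_injective_hom (R := R) X
  refine ⟨E ⧸ powTorsion 𝔟 E, inferInstance, inferInstance, injective_quotient_of_injective _,
    mkQ _ ∘ₗ f, ?_, isTorsionFreeIdeal_quotient_powTorsion E⟩
  rw [injective_iff_map_eq_zero]
  intro x hx
  obtain ⟨n, hn⟩ := (Quotient.mk_eq_zero _).1 hx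
  exact hX.pow n x fun a ha ↦ hf (by rw [map_smul, hn a ha, map_zero])

end PowerTorsion

section ExtLimit

open Abelian Limits ModuleCat Submodule

lemma bijective_directLimit_lift {R : Type*} [Ring R] {ι : Type*} [Preorder ι] [DecidableEq ι]
    [Nonempty ι] [IsDirectedOrder ι] {G : ι → Type*} [∀ i, AddCommGroup (G i)]
    [∀ i, Module R (G i)] {f : ∀ i j, i ≤ j → G i →ₗ[R] G j} {A : Type*} [AddCommGroup A]
    [Module R A] (g : ∀ i, G i →ₗ[R] A) (hg : ∀ i j hij x, g j (f i j hij x) = g i x)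
    (exists_eq_zero : ∀ i x, g i x = 0 → ∃ j hij, f i j hij x = 0)
    (exists_eq : ∀ y, ∃ i x, g i x = y) :
    Function.Bijective (Module.DirectLimit.lift R ι G f g hg) := by
  refine ⟨(injective_iff_map_eq_zero _).2 fun z hz ↦ ?_, fun y ↦ ?_⟩
  · obtain ⟨i, x, rfl⟩ := Module.DirectLimit.exists_of z
    rw [Module.DirectLimit.lift_of] at hz
    obtain ⟨j, hij, hx⟩ := exists_eq_zero i x hz
    rw [← Module.DirectLimit.of_f (hij := hij), hx, map_zero]
  · obtain ⟨i, x, rfl⟩ := exists_eq y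
    exact ⟨.of R ι G f i x, Module.DirectLimit.lift_of _ _ _⟩

variable {R : Type u} [CommRing R]

/-- The restriction map `Ext^i(R/J, X) → Ext^i(R/I, X)` for `I ≤ J`. -/
noncomputable def extRestrict {I J : Ideal R} (h : I ≤ J) (X : Type u) [AddCommGroup X]
    [Module R X] (i : ℕ) :
    Ext (of R (R ⧸ J)) (of R X) i →ₗ[R] Ext (of R (R ⧸ I)) (of R X) i :=
  (Ext.mk₀ (ofHom (mapQ I J LinearMap.id h))).precompOfLinear R (of R X) (zero_add i)

section

variable {I J : Ideal R} (h : I ≤ J) {X Y Z : Type u} [AddCommGroup X] [AddCommGroup Y]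
  [AddCommGroup Z] [Module R X] [Module R Y] [Module R Z] (i : ℕ)

lemma extRestrict_extRestrict {K : Ideal R} (h' : J ≤ K)
    (x : Ext (of R (R ⧸ K)) (of R X) i) :
    extRestrict h X i (extRestrict h' X i x) = extRestrict (h.trans h') X i x := by
  have mapQ_comp : ofHom (mapQ I J LinearMap.id h) ≫ ofHom (mapQ J K LinearMap.id h') =
      ofHom (mapQ I K LinearMap.id (h.trans h')) := by
    ext
    rfl
  exact (Ext.mk₀_comp_mk₀_assoc _ _ x).trans congr((Ext.mk₀ $mapQ_comp).comp x (zero_add i))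

lemma extRestrict_refl (x : Ext (of R (R ⧸ I)) (of R X) i) : extRestrict le_rfl X i x = x := by
  have mapQ_id : ofHom (mapQ I I LinearMap.id le_rfl) = 𝟙 (of R (R ⧸ I)) := by
    ext
    rfl
  exact congr((Ext.mk₀ $mapQ_id).comp x (zero_add i)).trans (Ext.mk₀_id_comp x)

lemma extRestrict_extPostcomp (f : X →ₗ[R] Y) (x : Ext (of R (R ⧸ J)) (of R X) i) :
    extRestrict h Y i (extPostcomp _ f i x) = extPostcomp _ f i (extRestrict h X i x) :=
  (Ext.comp_assoc _ _ _ (zero_add i) (add_zero i) (by lia)).symm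

lemma extRestrict_extConnecting {f : X →ₗ[R] Y} {g : Y →ₗ[R] Z} (hfg : Function.Exact f g)
    (hf : Function.Injective f) (hg : Function.Surjective g)
    (x : Ext (of R (R ⧸ J)) (of R Z) i) :
    extRestrict h X (i + 1) (extConnecting _ hfg hf hg i x) =
      extConnecting _ hfg hf hg i (extRestrict h Z i x) :=
  (Ext.comp_assoc _ _ _ (zero_add i) rfl (by lia)).symm

lemma coe_extZeroEquivTorsionBySet_mk₀ (f : of R (R ⧸ I) ⟶ of R X) :
    (extZeroEquivTorsionBySet I X (Ext.mk₀ f) : X) = f.hom 1 :=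
  congr(($((Ext.linearEquiv₀ (R := R)).apply_symm_apply f)).hom 1)

lemma coe_extZeroEquivTorsionBySet_extRestrict (x : Ext (of R (R ⧸ J)) (of R X) 0) :
    (extZeroEquivTorsionBySet I X (extRestrict h X 0 x) : X) = extZeroEquivTorsionBySet J X x := by
  obtain ⟨f, rfl⟩ := (Ext.linearEquiv₀ (R := R)).symm.surjective x
  exact congr((extZeroEquivTorsionBySet I X $(Ext.mk₀_comp_mk₀ _ f)).1).trans
    ((coe_extZeroEquivTorsionBySet_mk₀ _).trans (coe_extZeroEquivTorsionBySet_mk₀ f).symm)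

lemma coe_extZeroEquivTorsionBySet_extPostcomp (f : X →ₗ[R] Y)
    (x : Ext (of R (R ⧸ I)) (of R X) 0) :
    (extZeroEquivTorsionBySet I Y (extPostcomp _ f 0 x) : Y) =
      f (extZeroEquivTorsionBySet I X x) := by
  obtain ⟨g, rfl⟩ := (Ext.linearEquiv₀ (R := R)).symm.surjective x
  exact congr((extZeroEquivTorsionBySet I Y $(Ext.mk₀_comp_mk₀ g _)).1).trans
    ((coe_extZeroEquivTorsionBySet_mk₀ _).trans congr(f $(coe_extZeroEquivTorsionBySet_mk₀ g)).symm)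

end

section

variable (𝔟 : Ideal R) (X : Type u) [AddCommGroup X] [Module R X] (i : ℕ)

/-- The direct limit of the modules `Ext^i(R/𝔟^t, X)`. -/
abbrev ExtLimit : Type u :=
  Module.DirectLimit (fun t : ℕ ↦ Ext (of R (R ⧸ 𝔟 ^ t)) (of R X) i)
    fun _ _ h ↦ extRestrict (Ideal.pow_le_pow_right h) X i

instance : DirectedSystem (fun t : ℕ ↦ Ext (of R (R ⧸ 𝔟 ^ t)) (of R X) i)
    fun _ _ h ↦ extRestrict (Ideal.pow_le_pow_right h) X i where
  map_self _ x := extRestrict_refl i x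
  map_map _ _ _ _ _ x := extRestrict_extRestrict _ i _ x

lemma isTorsionIdeal_extLimit : IsTorsionIdeal 𝔟 (ExtLimit 𝔟 X i) := by
  intro z
  obtain ⟨t, x, rfl⟩ := Module.DirectLimit.exists_of z
  refine ⟨t, fun a ha ↦ ?_⟩
  rw [← map_smul, @isTorsionBySet_ext _ _ _ _ _ _ (isTorsionBySet_quotient (𝔟 ^ t)) (of R X) i x
    ⟨a, ha⟩, map_zero]

lemma torsionBySet_pow_le_powTorsion (t : ℕ) :
    torsionBySet R X (𝔟 ^ t : Ideal R) ≤ powTorsion 𝔟 X :=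
  fun _ hx ↦ ⟨t, fun a ha ↦ (mem_torsionBySet_iff _ _).1 hx ⟨a, ha⟩⟩

/-- The direct limit of the modules `Ext^0(R/𝔟^t, X)` is `Γ_𝔟(X)`. -/
noncomputable def extLimitZeroEquiv : ExtLimit 𝔟 X 0 ≃ₗ[R] powTorsion 𝔟 X :=
  LinearEquiv.ofBijective
    (Module.DirectLimit.lift R ℕ _ _
      (fun t ↦ inclusion (torsionBySet_pow_le_powTorsion 𝔟 X t) ∘ₗ
        (extZeroEquivTorsionBySet (𝔟 ^ t) X).toLinearMap)
      fun _ _ _ x ↦ Subtype.ext (coe_extZeroEquivTorsionBySet_extRestrict _ x))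
    ⟨Module.DirectLimit.lift_injective _ _ fun t ↦
      (inclusion_injective (torsionBySet_pow_le_powTorsion 𝔟 X t)).comp
        (extZeroEquivTorsionBySet (𝔟 ^ t) X).injective, by
      rintro ⟨x, t, hx⟩
      obtain ⟨y, hy⟩ := (extZeroEquivTorsionBySet (𝔟 ^ t) X).surjective
        ⟨x, (mem_torsionBySet_iff _ _).2 fun a ↦ hx a a.2⟩
      exact ⟨.of R ℕ _ _ t y,
        (Module.DirectLimit.lift_of _ _ _).trans (Subtype.ext congr(($hy).1))⟩⟩

/-- Local cohomology as the direct limit of the modules `Abelian.Ext (R/𝔟^t) M i`. -/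
noncomputable def extLimitEquivLocalCohomology (M : ModuleCat.{u} R) :
    ExtLimit 𝔟 M i ≃ₗ[R] (localCohomology 𝔟 i).obj M := by
  let D := localCohomology.diagram (localCohomology.idealPowersDiagram 𝔟) i
  let evalM := (evaluation (ModuleCat.{u} R) (ModuleCat.{u} R)).obj M
  have : HasColimit D := inferInstance
  let c := evalM.mapCocone (colimit.cocone D)
  have isColimit_c : IsColimit c := isColimitOfPreserves evalM (colimit.isColimit D)
  have : PreservesFilteredColimitsOfSize.{0, 0} (forget (ModuleCat.{u} R)) :=
    preservesFilteredColimitsOfSize_shrink.{0, u, 0, u} _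
  let e (t : ℕ) : (D ⋙ evalM).obj (.op (.op t)) ≃ₗ[R] Ext (of R (R ⧸ 𝔟 ^ t)) M i :=
    extObjEquivExt (of R (R ⧸ 𝔟 ^ t)) M i
  have restrict_e {s t : ℕ} (h : s ≤ t) (x : (D ⋙ evalM).obj (.op (.op s))) :
      extRestrict (Ideal.pow_le_pow_right h) M i (e s x) =
        e t ((D ⋙ evalM).map (homOfLE h).op.op x) :=
    (extObjEquivExt_map _ M i x).symm
  let toColimit (t : ℕ) : Ext (of R (R ⧸ 𝔟 ^ t)) M i →ₗ[R] (localCohomology 𝔟 i).obj M :=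
    (c.ι.app (.op (.op t))).hom ∘ₗ (e t).symm.toLinearMap
  have toColimit_e (t : ℕ) (x : (D ⋙ evalM).obj (.op (.op t))) :
      toColimit t (e t x) = c.ι.app (.op (.op t)) x :=
    congrArg _ ((e t).symm_apply_apply x)
  refine LinearEquiv.ofBijective (Module.DirectLimit.lift R ℕ _ _ toColimit fun s t h x ↦ ?_)
    (bijective_directLimit_lift _ _ (fun t x hx ↦ ?_) fun y ↦ ?_)
  · obtain ⟨x, rfl⟩ := (e s).surjective x
    exact (congrArg _ (restrict_e h x)).trans ((toColimit_e t _).trans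
      (congr($(c.w (homOfLE h).op.op) x).trans (toColimit_e s x).symm))
  · obtain ⟨x, rfl⟩ := (e t).surjective x
    obtain ⟨k, f, g, hfg⟩ := Concrete.isColimit_exists_of_rep_eq _ isColimit_c
      x 0 (((toColimit_e t x).symm.trans hx).trans (map_zero (c.ι.app (.op (.op t))).hom).symm)
    have le : t ≤ k.unop.unop := leOfHom f.unop.unop
    refine ⟨k.unop.unop, le, (restrict_e le x).trans ((LinearEquiv.map_eq_zero_iff _).2 ?_)⟩
    exact hfg.trans (map_zero ((D ⋙ evalM).map g).hom)
  · obtain ⟨t, x, rfl⟩ := Concrete.isColimit_exists_rep _ isColimit_c y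
    exact ⟨t.unop.unop, e _ x, toColimit_e _ x⟩

end

end ExtLimit

section LocalCohomology

open Abelian ModuleCat Submodule

variable {R : Type u} [CommRing R] {𝔟 : Ideal R}

lemma subsingleton_ext_succ_of_injective (N : ModuleCat.{u} R) (X : Type u) [AddCommGroup X]
    [Module R X] [Module.Injective R X] (i : ℕ) : Subsingleton (Ext N (of R X) (i + 1)) :=
  have := Module.injective_object_of_injective_module R X
  subsingleton_of_forall_eq 0 Ext.eq_zero_of_injective

lemma IsTorsionFreeIdeal.subsingleton_ext_zero {X : Type u} [AddCommGroup X] [Module R X]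
    (hX : IsTorsionFreeIdeal 𝔟 X) : Subsingleton (Ext (of R (R ⧸ 𝔟)) (of R X) 0) :=
  have : Subsingleton (torsionBySet R X 𝔟) := subsingleton_of_forall_eq 0 fun x ↦
    Subtype.ext (hX x fun a ha ↦ (mem_torsionBySet_iff _ _).1 x.2 ⟨a, ha⟩)
  (extZeroEquivTorsionBySet 𝔟 X).toEquiv.subsingleton

lemma IsTorsionFreeIdeal.subsingleton_ext_of_injective {E : Type u} [AddCommGroup E] [Module R E]
    [Module.Injective R E] (hE : IsTorsionFreeIdeal 𝔟 E) (i : ℕ) :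
    Subsingleton (Ext (of R (R ⧸ 𝔟)) (of R E) i) := by
  cases i with
  | zero => exact hE.subsingleton_ext_zero
  | succ i => exact subsingleton_ext_succ_of_injective _ E i

lemma IsTorsionIdeal.support_subset {X : Type u} [AddCommGroup X] [Module R X]
    (hX : IsTorsionIdeal 𝔟 X) : Module.support R X ⊆ PrimeSpectrum.zeroLocus 𝔟 := by
  intro p hp a ha
  obtain ⟨x, hx⟩ := Module.mem_support_iff'.1 hp
  obtain ⟨n, hn⟩ := hX x
  by_contra notMem
  exact hx (a ^ n) (fun mem ↦ notMem (p.2.mem_of_pow_mem n mem)) (hn _ (Ideal.pow_mem_pow ha n))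

section ShortExact

variable {A B C : Type u} [AddCommGroup A] [AddCommGroup B] [AddCommGroup C] [Module R A]
  [Module R B] [Module R C] {f : A →ₗ[R] B} {g : B →ₗ[R] C} (hfg : Function.Exact f g)
  (hf : Function.Injective f) (hg : Function.Surjective g)
include hfg hf hg

lemma bijective_extConnecting {N : Type u} [AddCommGroup N] [Module R N] (i : ℕ)
    [Subsingleton (Ext (of R N) (of R B) i)] [Subsingleton (Ext (of R N) (of R B) (i + 1))] :
    Function.Bijective (extConnecting N hfg hf hg i) := by
  refine ⟨(injective_iff_map_eq_zero _).2 fun x hx ↦ ?_, fun x ↦ ?_⟩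
  · obtain ⟨y, rfl⟩ := (exact_extPostcomp_extConnecting N hfg hf hg i x).1 hx
    rw [Subsingleton.elim y 0, map_zero]
  · exact (exact_extConnecting_extPostcomp N hfg hf hg i x).1 (Subsingleton.elim _ _)

/-- Dimension shifting: if the middle term of `0 → A → B → C → 0` is torsion-free and injective,
the connecting homomorphisms are isomorphisms. -/
noncomputable def extLimitShiftEquiv [Module.Injective R B] (hB : IsTorsionFreeIdeal 𝔟 B) (i : ℕ) :
    ExtLimit 𝔟 C i ≃ₗ[R] ExtLimit 𝔟 A (i + 1) :=
  Module.DirectLimit.congr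
    (fun t ↦
      have := (hB.pow t).subsingleton_ext_of_injective
      .ofBijective _ (bijective_extConnecting (N := R ⧸ 𝔟 ^ t) hfg hf hg i))
    fun _ _ _ ↦ LinearMap.ext fun x ↦ (extRestrict_extConnecting _ i hfg hf hg x).symm

end ShortExact

lemma IsTorsionIdeal.exists_extPostcomp_eq_extRestrict {B C : Type u} [AddCommGroup B]
    [AddCommGroup C] [Module R B] [Module R C] (hB : IsTorsionIdeal 𝔟 B) {g : B →ₗ[R] C}
    (hg : Function.Surjective g) (t : ℕ) (x : Ext (of R (R ⧸ 𝔟 ^ t)) (of R C) 0) :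
    ∃ (t' : ℕ) (h : t ≤ t') (y : Ext (of R (R ⧸ 𝔟 ^ t')) (of R B) 0),
      extPostcomp _ g 0 y = extRestrict (Ideal.pow_le_pow_right h) C 0 x := by
  obtain ⟨b, hb⟩ := hg (extZeroEquivTorsionBySet (𝔟 ^ t) C x)
  obtain ⟨k, hk⟩ := hB b
  obtain ⟨y, hy⟩ := (extZeroEquivTorsionBySet (𝔟 ^ max t k) B).surjective
    ⟨b, (mem_torsionBySet_iff _ _).2 fun a ↦ hk a (Ideal.pow_le_pow_right (le_max_right t k) a.2)⟩
  refine ⟨max t k, le_max_left t k, y, ?_⟩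
  apply (extZeroEquivTorsionBySet _ _).injective
  ext
  rw [coe_extZeroEquivTorsionBySet_extPostcomp, coe_extZeroEquivTorsionBySet_extRestrict, hy, hb]

variable [IsNoetherianRing R]

lemma IsTorsionIdeal.exists_extRestrict_eq_zero {X : Type u} [AddCommGroup X] [Module R X]
    (hX : IsTorsionIdeal 𝔟 X) (n t : ℕ) (x : Ext (of R (R ⧸ 𝔟 ^ t)) (of R X) (n + 1)) :
    ∃ (t' : ℕ) (h : t ≤ t'), extRestrict (Ideal.pow_le_pow_right h) X (n + 1) x = 0 := by
  induction n using Nat.strong_induction_on generalizing X with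
  | h n ih =>
    obtain ⟨E, _, _, _, f, hf, hE⟩ := hX.exists_injective_hom
    have hfg := LinearMap.exact_map_mkQ_range f
    have hg := mkQ_surjective (LinearMap.range f)
    have := subsingleton_ext_succ_of_injective (of R (R ⧸ 𝔟 ^ t)) E n
    obtain ⟨v, rfl⟩ := (exact_extConnecting_extPostcomp _ hfg hf hg n x).1 (Subsingleton.elim _ _)
    obtain ⟨t', h, u, hu⟩ : ∃ (t' : ℕ) (h : t ≤ t') (u : _),
        extPostcomp _ (mkQ _) n u = extRestrict (Ideal.pow_le_pow_right h) _ n v := by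
      cases n with
      | zero => exact hE.exists_extPostcomp_eq_extRestrict hg t v
      | succ n =>
        obtain ⟨t', h, hv⟩ := ih n n.lt_succ_self (hE.of_surjective _ hg) v
        exact ⟨t', h, 0, by rw [hv, map_zero]⟩
    refine ⟨t', h, ?_⟩
    rw [extRestrict_extConnecting, ← hu]
    exact (exact_extPostcomp_extConnecting _ hfg hf hg n).apply_apply_eq_zero u

/-- Dividing out a torsion submodule does not change `colim_t Ext^{i+1}(R/𝔟^t, -)`. -/
noncomputable def extLimitQuotientEquiv {A B C : Type u} [AddCommGroup A] [AddCommGroup B]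
    [AddCommGroup C] [Module R A] [Module R B] [Module R C] {f : A →ₗ[R] B} {g : B →ₗ[R] C}
    (hfg : Function.Exact f g) (hf : Function.Injective f) (hg : Function.Surjective g)
    (hA : IsTorsionIdeal 𝔟 A) (i : ℕ) : ExtLimit 𝔟 B (i + 1) ≃ₗ[R] ExtLimit 𝔟 C (i + 1) := by
  refine .ofBijective
    (Module.DirectLimit.lift R ℕ _ _
      (fun t ↦ Module.DirectLimit.of R ℕ _ _ t ∘ₗ extPostcomp _ g (i + 1)) fun s t h x ↦ ?_)
    (bijective_directLimit_lift _ _ (fun t x hx ↦ ?_) fun y ↦ ?_)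
  · rw [LinearMap.comp_apply, ← extRestrict_extPostcomp]
    exact Module.DirectLimit.of_f (hij := h)
  · obtain ⟨s, hs, hx⟩ := Module.DirectLimit.of.zero_exact hx
    rw [extRestrict_extPostcomp] at hx
    obtain ⟨a, ha⟩ := (exact_extPostcomp _ hfg hf hg (i + 1) _).1 hx
    obtain ⟨r, hr, ha'⟩ := hA.exists_extRestrict_eq_zero i s a
    refine ⟨r, hs.trans hr, ?_⟩
    rw [← extRestrict_extRestrict (Ideal.pow_le_pow_right hr) _ (Ideal.pow_le_pow_right hs), ← ha,
      extRestrict_extPostcomp, ha', map_zero]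
  · obtain ⟨t, x, rfl⟩ := Module.DirectLimit.exists_of y
    obtain ⟨s, hs, hx⟩ := hA.exists_extRestrict_eq_zero (i + 1) t (extConnecting _ hfg hf hg _ x)
    rw [extRestrict_extConnecting] at hx
    obtain ⟨z, hz⟩ := (exact_extPostcomp_extConnecting _ hfg hf hg (i + 1) _).1 hx
    exact ⟨s, z, (congrArg (Module.DirectLimit.of R ℕ _ _ s) hz).trans
      (Module.DirectLimit.of_f (hij := hs))⟩

section ExtFin

variable (hdim : ringKrullDim (R ⧸ 𝔟) ≤ 1)
include hdim

lemma ExtMem.powTorsion_right {X : Type u} [AddCommGroup X] [Module R X] (h₀ : ExtFin 𝔟 X 0)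
    (h₁ : ExtFin 𝔟 X 1) (i : ℕ) : ExtFin 𝔟 (powTorsion 𝔟 X) i :=
  have := (isTorsionFreeIdeal_quotient_powTorsion (𝔟 := 𝔟) X).subsingleton_ext_zero
  of_isTorsionIdeal hdim (isTorsionIdeal_powTorsion 𝔟 X)
    (h₀.zero_of_injective _ (subtype_injective _))
    (covariant₁ (LinearMap.exact_subtype_mkQ _) (subtype_injective _) (mkQ_surjective _)
      prop_of_subsingleton h₁) i

lemma ExtMem.extLimit_right {X : Type u} [AddCommGroup X] [Module R X] (hX : ∀ i, ExtFin 𝔟 X i)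
    (i j : ℕ) : ExtFin 𝔟 (ExtLimit 𝔟 X i) j := by
  have hΓ := (hX 0).powTorsion_right hdim (hX 1)
  induction i generalizing X with
  | zero => exact (hΓ j).of_equiv_right (extLimitZeroEquiv 𝔟 X).symm
  | succ i ih =>
    have exact_mkQ := LinearMap.exact_subtype_mkQ (powTorsion 𝔟 X)
    obtain ⟨E, _, _, _, f, hf, hE⟩ :=
      (isTorsionFreeIdeal_quotient_powTorsion (𝔟 := 𝔟) X).exists_injective_hom
    have exact_f := LinearMap.exact_map_mkQ_range f
    have := hE.subsingleton_ext_of_injective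
    have hQ (k : ℕ) : ExtFin 𝔟 (X ⧸ powTorsion 𝔟 X) k :=
      covariant₃ exact_mkQ (subtype_injective _) (mkQ_surjective _) (hX k) (hΓ (k + 1))
    have hC (k : ℕ) : ExtFin 𝔟 (E ⧸ LinearMap.range f) k :=
      covariant₃ exact_f hf (mkQ_surjective _) prop_of_subsingleton (hQ (k + 1))
    exact (ih hC ((hC 0).powTorsion_right hdim (hC 1))).of_equiv_right
      (extLimitShiftEquiv exact_f hf (mkQ_surjective _) hE i ≪≫ₗ
        (extLimitQuotientEquiv exact_mkQ (subtype_injective _) (mkQ_surjective _)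
          (isTorsionIdeal_powTorsion 𝔟 X) i).symm)

end ExtFin

end LocalCohomology

/-- Yang–Shen, Corollary 4.3(2) (module case): let `𝔞 ⊆ 𝔟` be proper ideals of a noetherian
ring `R` with `dim R/𝔟 ≤ 1`, and let `M` be an `R`-module with `Ext^i_R(R/𝔞, M)` finitely
generated for all `i`. Then `H^i_𝔟(M)` is `𝔟`-cofinite for all `i`. -/
theorem localCohomology_isCofinite_of_le
    {R : Type u} [CommRing R] [IsNoetherianRing R] (𝔞 𝔟 : Ideal R)
    (hab : 𝔞 ≤ 𝔟) (ha : 𝔞 ≠ ⊤) (hb : 𝔟 ≠ ⊤)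
    (hdim : ringKrullDim (R ⧸ 𝔟) ≤ 1)
    (M : ModuleCat.{u} R) (hext : ∀ i : ℕ, Module.Finite R (extIdeal 𝔞 i M)) :
    ∀ i : ℕ, IsCofinite 𝔟 ((localCohomology 𝔟 i).obj M) := by
  have extMem_𝔞 (i : ℕ) : ExtMem (finitelyGenerated R) (R ⧸ 𝔞) M i :=
    have : Module.Finite R (extObj (.of R (R ⧸ 𝔞)) M i) := hext i
    Module.Finite.equiv (extObjEquivExt (.of R (R ⧸ 𝔞)) M i)
  have torsion_𝔞 : Module.IsTorsionBySet R (R ⧸ 𝔟) 𝔞 :=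
    fun x a ↦ @isTorsionBySet_quotient _ _ 𝔟 x ⟨a, hab a.2⟩
  have extFin_𝔟 : ∀ i, ExtFin 𝔟 M i := ExtMem.of_isTorsionBySet extMem_𝔞 (R ⧸ 𝔟) torsion_𝔞
  intro i
  let e := extLimitEquivLocalCohomology 𝔟 i M
  have isTorsion : IsTorsionIdeal 𝔟 ((localCohomology 𝔟 i).obj M) :=
    (isTorsionIdeal_extLimit 𝔟 M i).of_injective e.symm.toLinearMap e.symm.injective
  refine ⟨isTorsion.support_subset, fun j ↦ ?_⟩
  have : Module.Finite R (Abelian.Ext (.of R (R ⧸ 𝔟)) ((localCohomology 𝔟 i).obj M) j) :=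
    (ExtMem.extLimit_right hdim extFin_𝔟 i j).of_equiv_right e
  exact Module.Finite.equiv (extObjEquivExt (.of R (R ⧸ 𝔟)) _ j).symm
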